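/- arXiv:1902.03822 — 2 statements merged into one kernel-verified Lean document; each statement's English description precedes it below -/
import Mathlib

section
/- For every finite forest F (a simple graph on a finite vertex type that is acyclic), the right-angled Artin group A(F) embeds into the one-relator group G = Gp⟨a, t | a(tat⁻¹) = (tat⁻¹)a⟩: there is an injective group homomorphism A(F) →* G. In particular, the right-angled Artin group of any finite forest embeds into a one-relator group. -/
/-- The set of commutator relators of the right-angled Artin group of a simple graph `Γ`. -/
def raagRels {V : Type} (Γ : SimpleGraph V) : Set (FreeGroup V) :=
  {x | ∃ u v : V, Γ.Adj u v ∧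
    x = FreeGroup.of u * FreeGroup.of v * (FreeGroup.of u)⁻¹ * (FreeGroup.of v)⁻¹}

/-- The relator `a t a t⁻¹ a⁻¹ t a⁻¹ t⁻¹` (i.e. `a(tat⁻¹)=(tat⁻¹)a`), with `a = of 0`, `t = of 1`. -/
def oneRel : FreeGroup (Fin 2) :=
  FreeGroup.of 0 * FreeGroup.of 1 * FreeGroup.of 0 * (FreeGroup.of 1)⁻¹ *
    (FreeGroup.of 0)⁻¹ * FreeGroup.of 1 * (FreeGroup.of 0)⁻¹ * (FreeGroup.of 1)⁻¹

/-!
The conjugates `tⁱ a t⁻ⁱ` generate a copy of the right-angled Artin group of the bi-infinite path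
inside `G`: sending `a` to the generator `0` and `t` to the shift maps `G` to the semidirect product
of that group with `ℤ`. Hence `A(P₄)` embeds into `G`, and it suffices to embed `A(F)` into `A(P₄)`
for every finite forest `F`.

For this, let `K` be the incidence graph of the integral points and the non-vertical integral lines
of the plane. Fix an incident pair of a point and a line, and for each of the two a shear that fixes
it and moves the other one to infinitely many positions; the two shears define an action of the free
group `F₂` on `K`. Send the two inner generators of `A(P₄)` to the incident pair in `A(K) ⋊ F₂`, and
each outer generator to the shear fixing the image of its neighbour. Conjugates of the inner
generators by words in the outer ones are then lifts to `A(P₄)` of vertices of `K`, and every lift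
commutes with lifts of infinitely many neighbours of the vertex below it. As two vertices of `K`
have at most one common neighbour, attaching the vertices of `F` one leaf at a time yields lifts
which lie over a copy of `F` that is induced in `K`, and which commute along its edges. So the
composite `A(F) → A(P₄) → A(K) ⋊ F₂` factors through the embedding `A(F) → A(K)`.
-/

open SimpleGraph SemidirectProduct

/-- The right-angled Artin group of `Γ`: adjacent generators commute. -/
abbrev Raag {V : Type} (Γ : SimpleGraph V) : Type := PresentedGroup (raagRels Γ)

namespace Raag

variable {V W : Type} {Γ : SimpleGraph V} {Δ : SimpleGraph W} {H : Type*} [Group H]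

/-- The generator of `Raag Γ` attached to a vertex. -/
def of (Γ : SimpleGraph V) (v : V) : Raag Γ := PresentedGroup.of v

lemma commute_of_of {u v : V} (h : Γ.Adj u v) : Commute (of Γ u) (of Γ v) := by
  have hrel : of Γ u * of Γ v * (of Γ u)⁻¹ * (of Γ v)⁻¹ = 1 :=
    PresentedGroup.one_of_mem (rels := raagRels Γ) ⟨u, v, h, rfl⟩
  rwa [mul_inv_eq_one, mul_inv_eq_iff_eq_mul] at hrel

/-- The universal property of a right-angled Artin group. -/
def lift (f : V → H) (hf : ∀ u v, Γ.Adj u v → Commute (f u) (f v)) : Raag Γ →* H :=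
  PresentedGroup.toGroup (f := f) <| by
    rintro _ ⟨u, v, huv, rfl⟩
    simp [(hf u v huv).eq]

@[simp] lemma lift_of (f : V → H) (hf : ∀ u v, Γ.Adj u v → Commute (f u) (f v)) (v : V) :
    lift f hf (of Γ v) = f v :=
  PresentedGroup.toGroup.of _

lemma hom_ext {f g : Raag Γ →* H} (h : ∀ v, f (of Γ v) = g (of Γ v)) : f = g :=
  PresentedGroup.ext h

/-- Functoriality of right-angled Artin groups with respect to graph homomorphisms. -/
def map (f : Γ →g Δ) : Raag Γ →* Raag Δ :=
  lift (fun v ↦ of Δ (f v)) fun _ _ h ↦ commute_of_of (f.map_adj h)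

@[simp] lemma map_of (f : Γ →g Δ) (v : V) : map f (of Γ v) = of Δ (f v) := lift_of _ _ v

-- The generators outside the range of `j` are killed by a retraction.
lemma map_injective (j : Γ ↪g Δ) : Function.Injective (map j.toHom) := by
  classical
  let r : W → Raag Γ := Function.extend j (of Γ) 1
  have r_apply (v : V) : r (j v) = of Γ v := j.injective.extend_apply _ _ v
  have commute_r (x y : W) (hxy : Δ.Adj x y) : Commute (r x) (r y) := by
    by_cases hx : ∃ u, j u = x
    · by_cases hy : ∃ v, j v = y
      · obtain ⟨⟨u, rfl⟩, v, rfl⟩ := And.intro hx hy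
        simpa only [r_apply] using commute_of_of (j.map_adj_iff.1 hxy)
      · simp [r, Function.extend_apply' _ _ _ hy]
    · simp [r, Function.extend_apply' _ _ _ hx]
  have retract : (lift r commute_r).comp (map j.toHom) = MonoidHom.id _ :=
    hom_ext fun v ↦ by simp [r_apply]
  exact Function.LeftInverse.injective (DFunLike.congr_fun retract)

/-- The action of graph automorphisms on the right-angled Artin group. -/
def autHom (Γ : SimpleGraph V) : (Γ ≃g Γ) →* MulAut (Raag Γ) where
  toFun σ := (map σ.toHom).toMulEquiv (map σ.symm.toHom)
    (hom_ext fun v ↦ by simp) (hom_ext fun v ↦ by simp)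
  map_one' := MulEquiv.toMonoidHom_injective <| hom_ext fun _ ↦ map_of _ _
  map_mul' σ τ := MulEquiv.toMonoidHom_injective <| hom_ext fun v ↦ by simp

@[simp] lemma autHom_apply_of (σ : Γ ≃g Γ) (v : V) : autHom Γ σ (of Γ v) = of Γ (σ v) :=
  map_of _ _

/-- The extension of a right-angled Artin group by a group acting on its defining graph. -/
abbrev Semidirect {A : Type*} [Group A] (ρ : A →* (Γ ≃g Γ)) : Type _ :=
  Raag Γ ⋊[(autHom Γ).comp ρ] A

lemma inl_of_apply {A : Type*} [Group A] (ρ : A →* (Γ ≃g Γ)) (g : A) (v : V) :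
    (inl (of Γ (ρ g v)) : Semidirect ρ) = inr g * inl (of Γ v) * (inr g)⁻¹ := by
  rw [← map_inv, ← inl_aut, MonoidHom.comp_apply, autHom_apply_of]

end Raag

/-! ### `A(P₄)` embeds into `G` -/

/-- The one-relator group `⟨a, t | a(tat⁻¹) = (tat⁻¹)a⟩`. -/
abbrev OneRelGroup : Type := PresentedGroup {oneRel}

namespace OneRelGroup

/-- The generator `a`. -/
def a : OneRelGroup := PresentedGroup.of 0

/-- The generator `t`. -/
def t : OneRelGroup := PresentedGroup.of 1

lemma commute_a_conj : Commute a (t * a * t⁻¹) := by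
  have hrel : a * t * a * t⁻¹ * a⁻¹ * t * a⁻¹ * t⁻¹ = 1 :=
    PresentedGroup.one_of_mem (rels := {oneRel}) rfl
  exact mul_inv_eq_one.1 (.trans (by group) hrel)

/-- The universal property of the one-relator group. -/
def lift {H : Type*} [Group H] (x y : H) (h : Commute x (y * x * y⁻¹)) : OneRelGroup →* H :=
  PresentedGroup.toGroup (f := ![x, y]) <| by
    rintro _ rfl
    suffices x * y * x * y⁻¹ * x⁻¹ * y * x⁻¹ * y⁻¹ = 1 by simpa [oneRel] using this
    exact .trans (by group) (mul_inv_eq_one.2 h.eq)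

section Lift

variable {H : Type*} [Group H] {x y : H} (h : Commute x (y * x * y⁻¹))

@[simp] lemma lift_a : lift x y h a = x := PresentedGroup.toGroup.of _

@[simp] lemma lift_t : lift x y h t = y := PresentedGroup.toGroup.of _

end Lift

lemma commute_zpow_conj {i j : ℤ} (hij : i ⋖ j) :
    Commute (t ^ i * a * (t ^ i)⁻¹) (t ^ j * a * (t ^ j)⁻¹) := by
  obtain rfl : i + 1 = j := Order.covBy_iff_add_one_eq.1 hij
  convert (Commute.conj_iff (t ^ i)).2 commute_a_conj using 1
  group

/-- The homomorphism from the right-angled Artin group of the bi-infinite path sending the `i`-th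
generator to `tⁱ a t⁻ⁱ`. -/
noncomputable def ofLine : Raag (hasse ℤ) →* OneRelGroup :=
  Raag.lift (fun i ↦ t ^ i * a * (t ^ i)⁻¹) fun _ _ h ↦
    h.elim commute_zpow_conj fun h ↦ (commute_zpow_conj h).symm

/-- The translations of the bi-infinite path. -/
noncomputable def translation : Multiplicative ℤ →* (hasse ℤ ≃g hasse ℤ) where
  toFun n :=
    { Equiv.addLeft n.toAdd with
      map_rel_iff' := by simp [Order.covBy_iff_add_one_eq, add_assoc] }
  map_one' := RelIso.ext fun i ↦ zero_add i
  map_mul' m n := RelIso.ext fun i ↦ add_assoc m.toAdd n.toAdd i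

lemma translation_apply (n : Multiplicative ℤ) (i : ℤ) : translation n i = n.toAdd + i := rfl

/-- The homomorphism sending `a` to the generator `0` of the line group and `t` to the unit
translation. -/
noncomputable def toLineSemidirect : OneRelGroup →* Raag.Semidirect translation :=
  lift (inl (Raag.of _ 0)) (inr (.ofAdd 1)) <| by
    rw [← Raag.inl_of_apply, translation_apply]
    have adj : (hasse ℤ).Adj 0 (0 + 1) := .inl (Order.covBy_add_one 0)
    simpa [add_comm] using (Raag.commute_of_of adj).map inl

lemma toLineSemidirect_a : toLineSemidirect a = inl (Raag.of _ 0) := lift_a _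

lemma toLineSemidirect_t_zpow (i : ℤ) : toLineSemidirect (t ^ i) = inr (.ofAdd i) := by
  rw [map_zpow, toLineSemidirect, lift_t, ← map_zpow, ← ofAdd_zsmul, smul_eq_mul, mul_one]

lemma toLineSemidirect_comp_ofLine : toLineSemidirect.comp ofLine = inl :=
  Raag.hom_ext fun i ↦ by
    rw [MonoidHom.comp_apply, ofLine, Raag.lift_of, map_mul, map_mul, map_inv,
      toLineSemidirect_t_zpow, toLineSemidirect_a, ← Raag.inl_of_apply, translation_apply,
      toAdd_ofAdd, add_zero]

lemma ofLine_injective : Function.Injective ofLine := by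
  refine .of_comp (f := toLineSemidirect) ?_
  rw [← MonoidHom.coe_comp, toLineSemidirect_comp_ofLine]
  exact inl_injective

end OneRelGroup

/-- The inclusion of a finite path into the bi-infinite one. -/
def pathGraphEmbedding (n : ℕ) : pathGraph n ↪g hasse ℤ where
  toFun i := i
  inj' i j h := by simpa [Fin.ext_iff] using h
  map_rel_iff' := by
    intro i j
    change (hasse ℤ).Adj (i : ℤ) (j : ℤ) ↔ _
    simp only [hasse_adj, Order.covBy_iff_add_one_eq, pathGraph_adj]
    norm_cast

theorem exists_injective_raag_pathGraph_oneRelGroup (n : ℕ) :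
    ∃ ψ : Raag (pathGraph n) →* OneRelGroup, Function.Injective ψ :=
  ⟨OneRelGroup.ofLine.comp (Raag.map (pathGraphEmbedding n).toHom),
    OneRelGroup.ofLine_injective.comp (Raag.map_injective _)⟩

/-! ### Induced lifts of forests -/

theorem exists_subsingleton_neighborSet {V : Type*} [Finite V] [Nonempty V] {F : SimpleGraph V}
    (hF : F.IsAcyclic) :
    ∃ v, (F.neighborSet v).Subsingleton := by
  classical
  have := Fintype.ofFinite V
  cases subsingleton_or_nontrivial V with
  | inl _ => exact ⟨Classical.arbitrary V, Set.subsingleton_of_subsingleton⟩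
  | inr _ =>
    obtain ⟨T, hFT, -, hT⟩ := connected_top.exists_isTree_le_of_le_of_isAcyclic le_top hF
    obtain ⟨v, hv⟩ := hT.exists_vert_degree_one_of_nontrivial
    obtain ⟨w, -, hw⟩ := degree_eq_one_iff_existsUnique_adj.1 hv
    exact ⟨v, fun x hx y hy ↦ (hw x (hFT hx)).trans (hw y (hFT hy)).symm⟩

theorem exists_subsingleton_neighborSet_inter {V : Type*} {F : SimpleGraph V} (hF : F.IsAcyclic)
    {s : Finset V} (hs : s.Nonempty) : ∃ v ∈ s, (F.neighborSet v ∩ s).Subsingleton := by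
  have := hs.to_subtype
  obtain ⟨⟨v, hv⟩, hleaf⟩ := exists_subsingleton_neighborSet (hF.induce (s : Set V))
  refine ⟨v, hv, fun x hx y hy ↦ Subtype.ext_iff.1 (?_ : (⟨x, hx.2⟩ : (s : Set V)) = ⟨y, hy.2⟩)⟩
  exact hleaf hx.1 hy.1

/-- A choice `f` of lifts along `π` is good at a pair of vertices of `F` if it preserves adjacency
there, and the projected pair is nondegenerate and adjacent in `K` only if it is so in `F`. Being
good at all pairs means that `f` is a homomorphism lifting an induced copy of `F` in `K`. -/
structure IsGoodPair {V W U : Type*} (F : SimpleGraph V) {H : SimpleGraph W} {K : SimpleGraph U}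
    (π : H →g K) (f : V → W) (u v : V) : Prop where
  adj_lift : F.Adj u v → H.Adj (f u) (f v)
  adj_of_adj : K.Adj (π (f u)) (π (f v)) → F.Adj u v
  ne : π (f u) ≠ π (f v)

section InducedLift

variable {V W U : Type*} {F : SimpleGraph V} {H : SimpleGraph W} {K : SimpleGraph U} {π : H →g K}

instance (f : V → W) : Std.Symm (IsGoodPair F π f) where
  symm _ _ h := ⟨fun e ↦ (h.adj_lift e.symm).symm, fun e ↦ (h.adj_of_adj e.symm).symm, h.ne.symm⟩

lemma exists_hom_embedding_of_pairwise {f : V → W} (hf : Pairwise (IsGoodPair F π f)) :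
    ∃ (g : F →g H) (j : F ↪g K), ∀ v, π (g v) = j v := by
  have inj : Function.Injective (π ∘ f) := fun u v ↦ not_imp_not.1 fun huv ↦ (hf huv).ne
  let g : F →g H := ⟨f, fun e ↦ (hf e.ne).adj_lift e⟩
  refine ⟨g, ⟨⟨π ∘ f, inj⟩, ⟨fun e ↦ ?_, fun e ↦ π.map_adj (g.map_adj e)⟩⟩, fun _ ↦ rfl⟩
  exact (hf (ne_of_apply_ne _ e.ne)).adj_of_adj e

variable (hK : Pairwise fun x y ↦ (K.commonNeighbors x y).Subsingleton)
  (hπ : ∀ h, (π '' H.neighborSet h).Infinite)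
include hK hπ

lemma exists_adj_avoiding (h : W) (S : Finset U) :
    ∃ h', H.Adj h h' ∧ π h' ∉ S ∧ ∀ z ∈ S, K.Adj z (π h') → z = π h := by
  have hfin : (⋃ z ∈ (S : Set U) \ {π h}, K.commonNeighbors z (π h)).Finite :=
    (S.finite_toSet.sdiff).biUnion fun _ hz ↦ (hK hz.2).finite
  obtain ⟨_, ⟨h', hadj, rfl⟩, hh'⟩ := (hπ h).exists_notMem_finite (S.finite_toSet.union hfin)
  refine ⟨h', hadj, fun hS ↦ hh' (.inl hS), fun z hz hzh' ↦ by_contra fun hne ↦ hh' (.inr ?_)⟩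
  exact Set.mem_biUnion ⟨hz, hne⟩ ⟨hzh', π.map_adj hadj⟩

lemma exists_not_adj_avoiding [Nonempty W] (S : Finset U) :
    ∃ h, π h ∉ S ∧ ∀ z ∈ S, ¬ K.Adj z (π h) := by
  obtain ⟨h₁, -, h₁S, -⟩ := exists_adj_avoiding hK hπ (Classical.arbitrary W) S
  obtain ⟨h₂, -, h₂S, h₂adj⟩ := exists_adj_avoiding hK hπ h₁ S
  exact ⟨h₂, h₂S, fun z hz hadj ↦ h₁S (h₂adj z hz hadj ▸ hz)⟩

lemma exists_lift_insert [Nonempty W] [DecidableEq V] {s : Finset V} {f : V → W}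
    (hf : (s : Set V).Pairwise (IsGoodPair F π f)) {v : V} (hv : v ∉ s)
    (hleaf : (F.neighborSet v ∩ s).Subsingleton) :
    ∃ w, ∀ u ∈ s, IsGoodPair F π (Function.update f v w) v u := by
  classical
  let S : Finset U := s.image (π ∘ f)
  have mem_S {u : V} (hu : u ∈ s) : π (f u) ∈ S := Finset.mem_image_of_mem _ hu
  suffices ∃ w, π w ∉ S ∧ ∀ u ∈ s, (F.Adj v u → H.Adj w (f u)) ∧
      (K.Adj (π (f u)) (π w) → F.Adj v u) by
    obtain ⟨w, hwS, hw⟩ := this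
    refine ⟨w, fun u hu ↦ ?_⟩
    have huv : u ≠ v := ne_of_mem_of_not_mem hu hv
    constructor
    · simpa [huv] using (hw u hu).1
    · simpa [huv] using fun e ↦ (hw u hu).2 (.symm e)
    · simpa [huv] using fun e : π w = π (f u) ↦ hwS (e ▸ mem_S hu)
  rcases (F.neighborSet v ∩ s).eq_empty_or_nonempty with hempty | ⟨p, hvp, hp⟩
  · obtain ⟨w, hwS, hw⟩ := exists_not_adj_avoiding hK hπ S
    refine ⟨w, hwS, fun u hu ↦ ⟨fun hvu ↦ ?_, fun e ↦ (hw _ (mem_S hu) e).elim⟩⟩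
    exact (Set.eq_empty_iff_forall_notMem.1 hempty u ⟨hvu, hu⟩).elim
  · obtain ⟨w, hpw, hwS, hw⟩ := exists_adj_avoiding hK hπ (f p) S
    refine ⟨w, hwS, fun u hu ↦ ⟨fun hvu ↦ ?_, fun e ↦ ?_⟩⟩
    · rw [hleaf ⟨hvu, hu⟩ ⟨hvp, hp⟩]
      exact hpw.symm
    · obtain rfl : u = p := by_contra fun hup ↦ (hf hu hp hup).ne (hw _ (mem_S hu) e)
      exact hvp

lemma exists_pairwise_isGoodPair [Nonempty W] (hF : F.IsAcyclic) (s : Finset V) :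
    ∃ f : V → W, (s : Set V).Pairwise (IsGoodPair F π f) := by
  classical
  induction s using Finset.eraseInduction with | _ s ih
  rcases s.eq_empty_or_nonempty with rfl | hs
  · exact ⟨fun _ ↦ Classical.arbitrary W, by simp⟩
  obtain ⟨v, hv, hleaf⟩ := exists_subsingleton_neighborSet_inter hF hs
  obtain ⟨f, hf⟩ := ih v hv
  have hvs : v ∉ s.erase v := Finset.notMem_erase v s
  obtain ⟨w, hw⟩ := exists_lift_insert hK hπ hf hvs <|
    hleaf.anti <| Set.inter_subset_inter_right _ (Finset.coe_subset.2 (s.erase_subset v))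
  refine ⟨Function.update f v w, ?_⟩
  rw [← Finset.insert_erase hv, Finset.coe_insert,
    Set.pairwise_insert_of_symm_of_notMem (mod_cast hvs)]
  refine ⟨fun x hx y hy hxy ↦ ?_, hw⟩
  obtain ⟨hadj, hadj', hne⟩ := hf hx hy hxy
  have hxv : x ≠ v := ne_of_mem_of_not_mem hx hvs
  have hyv : y ≠ v := ne_of_mem_of_not_mem hy hvs
  constructor <;> simpa [hxv, hyv]

theorem exists_hom_embedding_of_isAcyclic [Finite V] [Nonempty W] (hF : F.IsAcyclic) :
    ∃ (g : F →g H) (j : F ↪g K), ∀ v, π (g v) = j v := by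
  have := Fintype.ofFinite V
  obtain ⟨f, hf⟩ := exists_pairwise_isGoodPair hK hπ hF Finset.univ
  exact exists_hom_embedding_of_pairwise (by simpa [Set.pairwise_univ] using hf)

end InducedLift

/-! ### Forest groups embed into `A(P₄)` -/

/-- The incidence graph of the points `(false, p, q)` and the lines `(true, m, b)` of the integral
plane, where the line `(m, b)` consists of the points with `q + b = p * m`. With this sign of `b`
the incidence relation is symmetric under duality. -/
def incidenceGraph : SimpleGraph (Bool × ℤ × ℤ) where
  Adj x y := x.1 ≠ y.1 ∧ x.2.2 + y.2.2 = x.2.1 * y.2.1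
  symm := ⟨fun _ _ h ↦ ⟨h.1.symm, by linarith [h.2]⟩⟩
  loopless := ⟨fun _ h ↦ h.1 rfl⟩

lemma incidenceGraph_adj {x y : Bool × ℤ × ℤ} :
    incidenceGraph.Adj x y ↔ x.1 ≠ y.1 ∧ x.2.2 + y.2.2 = x.2.1 * y.2.1 :=
  Iff.rfl

lemma incidenceGraph_commonNeighbors_subsingleton :
    Pairwise fun x y ↦ (incidenceGraph.commonNeighbors x y).Subsingleton := by
  rintro ⟨c, p, q⟩ ⟨d, p', q'⟩ hne ⟨e, m, b⟩ ⟨⟨hce, h₁⟩, hde, h₂⟩ ⟨e', m', b'⟩ ⟨⟨hce', h₃⟩, -, h₄⟩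
  dsimp only at *
  obtain rfl : c = d := (Bool.eq_not.2 hce).trans (Bool.eq_not.2 hde).symm
  obtain rfl : e = e' := (Bool.eq_not.2 hce.symm).trans (Bool.eq_not.2 hce'.symm).symm
  have hmul : (p - p') * (m - m') = 0 := by linear_combination h₂ + h₃ - h₁ - h₄
  rcases mul_eq_zero.1 hmul with hp | hm
  · obtain rfl : p = p' := sub_eq_zero.1 hp
    exact absurd (by rw [add_right_cancel (h₁.trans h₂.symm)]) hne
  · obtain rfl : m = m' := sub_eq_zero.1 hm
    rw [add_left_cancel (h₁.trans h₃.symm)]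

/-- The shears fixing the base vertex of colour `c` and moving the one of the other colour. -/
def shear (c : Bool) : Multiplicative ℤ →* (incidenceGraph ≃g incidenceGraph) where
  toFun n :=
    { toFun x := if x.1 = c then (x.1, x.2.1, x.2.2 + n.toAdd * x.2.1)
        else (x.1, x.2.1 + n.toAdd, x.2.2)
      invFun x := if x.1 = c then (x.1, x.2.1, x.2.2 - n.toAdd * x.2.1)
        else (x.1, x.2.1 - n.toAdd, x.2.2)
      left_inv := by rintro ⟨d, p, q⟩; by_cases h : d = c <;> simp [h]
      right_inv := by rintro ⟨d, p, q⟩; by_cases h : d = c <;> simp [h]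
      map_rel_iff' := by
        rintro ⟨d, p, q⟩ ⟨e, m, b⟩
        cases c <;> cases d <;> cases e <;> grind [incidenceGraph_adj] }
  map_one' := RelIso.ext fun x ↦ by simp
  map_mul' m n := RelIso.ext <| by
    rintro ⟨d, p, q⟩
    by_cases h : d = c <;> simp [h, add_mul, add_comm, add_left_comm]

/-- The vertices of the standard incident pair: the origin and the horizontal axis. -/
def baseVertex (c : Bool) : Bool × ℤ × ℤ := (c, 0, 0)

lemma adj_baseVertex (c : Bool) : incidenceGraph.Adj (baseVertex c) (baseVertex !c) := by
  simp [baseVertex, incidenceGraph_adj]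

lemma shear_baseVertex (c : Bool) (n : Multiplicative ℤ) :
    shear c n (baseVertex c) = baseVertex c := by
  simp [shear, baseVertex]

lemma shear_baseVertex_not (c : Bool) (n : Multiplicative ℤ) :
    shear c n (baseVertex !c) = (!c, n.toAdd, 0) := by
  simp [shear, baseVertex]

/-- The action of the free group on the incidence graph by shears. -/
def shearHom : FreeGroup Bool →* (incidenceGraph ≃g incidenceGraph) :=
  FreeGroup.lift fun c ↦ shear c (.ofAdd 1)

lemma shearHom_of_zpow (c : Bool) (n : ℤ) :
    shearHom (FreeGroup.of c ^ n) = shear c (.ofAdd n) := by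
  rw [map_zpow, shearHom, FreeGroup.lift_apply_of, ← map_zpow, ← ofAdd_zsmul, smul_eq_mul, mul_one]

lemma commute_of_baseVertex (c : Bool) :
    Commute (inr (FreeGroup.of c) : Raag.Semidirect shearHom) (inl (Raag.of _ (baseVertex c))) := by
  have h := Raag.inl_of_apply shearHom (FreeGroup.of c) (baseVertex c)
  rw [shearHom, FreeGroup.lift_apply_of, shear_baseVertex] at h
  exact (eq_mul_inv_iff_mul_eq.1 h).symm

/-- The inner vertex of colour `c` of the path on four vertices. -/
def innerVertex (c : Bool) : Fin 4 := bif c then 2 else 1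

/-- The outer vertex of the path on four vertices next to the inner vertex of colour `c`. -/
def outerVertex (c : Bool) : Fin 4 := bif c then 3 else 0

lemma adj_outer_inner (c : Bool) : (pathGraph 4).Adj (outerVertex c) (innerVertex c) := by
  cases c <;> simp [pathGraph_adj, outerVertex, innerVertex]

lemma adj_inner_inner (c : Bool) : (pathGraph 4).Adj (innerVertex c) (innerVertex !c) := by
  cases c <;> simp [pathGraph_adj, innerVertex]

lemma commute_of_pathGraph_adj {M : Type*} [Mul M] {n : ℕ} {f : Fin (n + 1) → M}
    (hf : ∀ i : Fin n, Commute (f i.castSucc) (f i.succ)) {u v : Fin (n + 1)}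
    (h : (pathGraph (n + 1)).Adj u v) : Commute (f u) (f v) := by
  wlog huv : u ⋖ v generalizing u v
  · exact (this h.symm (h.resolve_left huv)).symm
  obtain ⟨i, rfl⟩ := Fin.exists_castSucc_eq.2 (huv.lt.trans_le v.le_last).ne
  rw [Fin.covBy_iff] at huv
  obtain rfl : i.succ = v := Fin.ext (by simpa using Nat.covBy_iff_add_one_eq.1 huv)
  exact hf i

/-- The images of the generators of `A(P₄)` under `pathRep`: the inner ones go to the generators of
the standard incident pair, and the outer ones to the generators of the free group. -/
def pathRepGen : Fin 4 → Raag.Semidirect shearHom :=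
  ![inr (.of false), inl (Raag.of _ (baseVertex false)), inl (Raag.of _ (baseVertex true)),
    inr (.of true)]

lemma commute_pathRepGen_succ :
    ∀ i : Fin 3, Commute (pathRepGen i.castSucc) (pathRepGen i.succ) :=
  Fin.forall_fin_succ.2 ⟨commute_of_baseVertex _, Fin.forall_fin_two.2
    ⟨(Raag.commute_of_of (adj_baseVertex _)).map inl, (commute_of_baseVertex _).symm⟩⟩

/-- The representation of `A(P₄)` that recognises the lifts of vertices of the incidence graph. -/
def pathRep : Raag (pathGraph 4) →* Raag.Semidirect shearHom :=
  Raag.lift pathRepGen fun _ _ ↦ commute_of_pathGraph_adj commute_pathRepGen_succ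

lemma pathRep_inner (c : Bool) :
    pathRep (Raag.of _ (innerVertex c)) = inl (Raag.of _ (baseVertex c)) := by
  cases c <;> exact Raag.lift_of _ _ _

lemma pathRep_outer (c : Bool) : pathRep (Raag.of _ (outerVertex c)) = inr (.of c) := by
  cases c <;> exact Raag.lift_of _ _ _

/-- The homomorphism from the free group onto the subgroup of `A(P₄)` generated by the outer
generators. -/
def outerHom : FreeGroup Bool →* Raag (pathGraph 4) :=
  FreeGroup.lift fun c ↦ Raag.of _ (outerVertex c)

lemma pathRep_outerHom (g : FreeGroup Bool) : pathRep (outerHom g) = inr g := by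
  have : pathRep.comp outerHom = inr :=
    FreeGroup.ext_hom _ _ fun c ↦ by simp [outerHom, pathRep_outer]
  exact DFunLike.congr_fun this g

/-- The conjugate of the inner generator of colour `x.2` by the word `x.1` in the outer ones. -/
def innerConj (x : FreeGroup Bool × Bool) : Raag (pathGraph 4) :=
  outerHom x.1 * Raag.of _ (innerVertex x.2) * (outerHom x.1)⁻¹

/-- The vertex of the incidence graph below the conjugate `innerConj x`. -/
def vertexBelow (x : FreeGroup Bool × Bool) : Bool × ℤ × ℤ :=
  shearHom x.1 (baseVertex x.2)

lemma pathRep_innerConj (x : FreeGroup Bool × Bool) :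
    pathRep (innerConj x) = inl (Raag.of _ (vertexBelow x)) := by
  simp [innerConj, vertexBelow, pathRep_inner, pathRep_outerHom, Raag.inl_of_apply]

/-- The graph of conjugates of inner generators: adjacent ones commute and lie above an
incident pair. -/
def liftGraph : SimpleGraph (FreeGroup Bool × Bool) where
  Adj x y := Commute (innerConj x) (innerConj y) ∧
    incidenceGraph.Adj (vertexBelow x) (vertexBelow y)
  symm := ⟨fun _ _ h ↦ ⟨h.1.symm, h.2.symm⟩⟩
  loopless := ⟨fun _ h ↦ h.2.ne rfl⟩

/-- The projection of the graph of conjugates to the incidence graph. -/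
def liftGraphProj : liftGraph →g incidenceGraph := ⟨vertexBelow, And.right⟩

lemma commute_innerConj (g : FreeGroup Bool) (c : Bool) (n : ℤ) :
    Commute (innerConj (g, c)) (innerConj (g * FreeGroup.of c ^ n, !c)) := by
  have outer : Commute (Raag.of _ (innerVertex c)) (outerHom (FreeGroup.of c ^ n)) := by
    simpa [outerHom] using (Raag.commute_of_of (adj_outer_inner c)).symm.zpow_right n
  have inner := Raag.commute_of_of (adj_inner_inner c)
  have := (Commute.conj_iff (outerHom g)).2 ((outer.mul_right inner).mul_right outer.inv_right)
  simpa [innerConj, mul_assoc] using this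

lemma vertexBelow_mul_zpow (g : FreeGroup Bool) (c : Bool) (n : ℤ) :
    vertexBelow (g * FreeGroup.of c ^ n, !c) = shearHom g (!c, n, 0) := by
  rw [vertexBelow, map_mul, shearHom_of_zpow, RelIso.mul_apply, shear_baseVertex_not, toAdd_ofAdd]

lemma liftGraph_adj (g : FreeGroup Bool) (c : Bool) (n : ℤ) :
    liftGraph.Adj (g, c) (g * FreeGroup.of c ^ n, !c) := by
  refine ⟨commute_innerConj g c n, ?_⟩
  rw [vertexBelow_mul_zpow, vertexBelow, Iso.map_adj_iff]
  simp [baseVertex, incidenceGraph_adj]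

lemma infinite_image_neighborSet (x : FreeGroup Bool × Bool) :
    (liftGraphProj '' liftGraph.neighborSet x).Infinite := by
  obtain ⟨g, c⟩ := x
  refine Set.infinite_of_injective_forall_mem (f := fun n : ℤ ↦ shearHom g (!c, n, 0)) ?_ ?_
  · exact fun m n h ↦ by simpa using h
  · exact fun n ↦ ⟨_, liftGraph_adj g c n, vertexBelow_mul_zpow g c n⟩

theorem exists_injective_raag_raag_pathGraph_four {V : Type} [Finite V] {F : SimpleGraph V}
    (hF : F.IsAcyclic) : ∃ φ : Raag F →* Raag (pathGraph 4), Function.Injective φ := by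
  obtain ⟨g, j, hgj⟩ := exists_hom_embedding_of_isAcyclic
    incidenceGraph_commonNeighbors_subsingleton infinite_image_neighborSet hF
  let φ : Raag F →* Raag (pathGraph 4) :=
    Raag.lift (fun v ↦ innerConj (g v)) fun _ _ h ↦ (g.map_adj h).1
  have factor : pathRep.comp φ = inl.comp (Raag.map j.toHom) := Raag.hom_ext fun v ↦ by
    have hv : vertexBelow (g v) = j v := hgj v
    simp [φ, pathRep_innerConj, hv]
  refine ⟨φ, .of_comp (f := pathRep) ?_⟩
  rw [← MonoidHom.coe_comp, factor]
  exact inl_injective.comp (Raag.map_injective j)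

/-- For every finite forest `F`, the right-angled Artin group `A(F)` embeds into the
one-relator group `Gp⟨a,t | a(tat⁻¹)=(tat⁻¹)a⟩`. -/
theorem raag_forest_embeds_oneRelator (V : Type) [Fintype V] (F : SimpleGraph V)
    (hF : F.IsAcyclic) :
    ∃ φ : PresentedGroup (raagRels F) →* PresentedGroup {oneRel},
      Function.Injective φ := by
  obtain ⟨φ, hφ⟩ := exists_injective_raag_raag_pathGraph_four hF
  obtain ⟨ψ, hψ⟩ := exists_injective_raag_pathGraph_oneRelGroup 4
  exact ⟨ψ.comp φ, hψ.comp hφ⟩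
end

section
/- Let Γ be a simple graph on a finite vertex type. Then the right-angled Artin group A(Γ) embeds into some one-relator group (i.e., there exist a type B, an element r of FreeGroup B, and an injective group homomorphism A(Γ) →* PresentedGroup {r}) if and only if Γ is acyclic (a forest). -/
/-!
The right-angled Artin group of the two-way infinite path embeds in the one-relator group
`⟨a, t | [a, t a t⁻¹]⟩`, its mapping torus under translation. Doubling a graph `Λ` along the star
of a vertex `q` gives a graph whose right-angled Artin group is the subgroup of index two of `A(Λ)`
in which the exponent of `q` is even. If `Λ` has girth at least five and two neighbours at each
vertex, so has its double, and one doubling suffices to attach a leaf to an induced forest at any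
vertex. Hence every finite forest is an induced subgraph of an iterated double of the path.

Conversely, write a nontrivial relator, up to conjugacy, as `W ^ N` with `W` cyclically reduced and
not a proper power; then `W` has a stacking in the sense of Louder and Wilton. If `Γ` contains a
cycle with `n ≥ 3` vertices, lift their generators to `x i` in the free group `F`. Each commutator
`[x i, x (i + 1)]` is a product of finitely many conjugates of `W ^ N` and of their inverses. Let
`K` be the subgroup of `F` generated by the `x i` and these conjugates, each of which bounds a cell
attached along `W` in the Schreier graph of `F ⧸ K`. The lifts to Heisenberg groups of pairs of
consecutive characters dual to the `x i` give `n` independent homological relations among the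
conjugates, whereas the stacking allows fewer than `n`.
-/

open Function

/-! ### Right-angled Artin groups -/

/-- The right-angled Artin group of a simple graph. -/
abbrev RAAG {V : Type} (Γ : SimpleGraph V) : Type := PresentedGroup (raagRels Γ)

/-- The property of embedding into a group with a presentation by a single relator. -/
def EmbedsInOneRelator (G : Type*) [Group G] : Prop :=
  ∃ (B : Type) (r : FreeGroup B) (φ : G →* PresentedGroup {r}), Injective φ

theorem EmbedsInOneRelator.of_injective {G H : Type*} [Group G] [Group H]
    (hH : EmbedsInOneRelator H) (f : G →* H) (hf : Injective f) : EmbedsInOneRelator G := by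
  obtain ⟨B, r, φ, hφ⟩ := hH
  exact ⟨B, r, φ.comp f, hφ.comp hf⟩

namespace RAAG

variable {V W : Type} {Γ : SimpleGraph V} {Λ : SimpleGraph W} {G : Type*} [Group G]

/-- The standard generator of `RAAG Γ` attached to a vertex. -/
abbrev of (Γ : SimpleGraph V) (v : V) : RAAG Γ := PresentedGroup.of v

theorem commute_of {u v : V} (h : Γ.Adj u v) : Commute (of Γ u) (of Γ v) :=
  commutatorElement_eq_one_iff_commute.1 <|
    PresentedGroup.one_of_mem (rels := raagRels Γ) ⟨u, v, h, rfl⟩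

/-- The universal property of a right-angled Artin group. -/
def lift (f : V → G) (hf : ∀ u v, Γ.Adj u v → Commute (f u) (f v)) : RAAG Γ →* G :=
  PresentedGroup.toGroup (f := f) <| by
    rintro _ ⟨u, v, huv, rfl⟩
    simpa only [commutatorElement_def, map_mul, map_inv, FreeGroup.lift_apply_of] using
      commutatorElement_eq_one_iff_commute.2 (hf u v huv)

@[simp]
theorem lift_of (f : V → G) (hf : ∀ u v, Γ.Adj u v → Commute (f u) (f v)) (v : V) :
    lift f hf (of Γ v) = f v :=
  PresentedGroup.toGroup.of _

/-- A graph homomorphism induces a homomorphism of right-angled Artin groups. -/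
def map (f : Γ →g Λ) : RAAG Γ →* RAAG Λ :=
  lift (fun v => of Λ (f v)) fun _ _ h => commute_of (f.map_adj h)

@[simp]
theorem map_of (f : Γ →g Λ) (v : V) : map f (of Γ v) = of Λ (f v) :=
  lift_of _ _ v

-- Killing the generators outside the image of `e` is a retraction.
theorem map_injective (e : Γ ↪g Λ) : Injective (map e.toHom) := by
  let ρ : RAAG Λ →* RAAG Γ := lift (extend e (of Γ) 1) <| by
    intro u v huv
    by_cases hu : ∃ x, e x = u
    · by_cases hv : ∃ x, e x = v
      · obtain ⟨x, rfl⟩ := hu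
        obtain ⟨y, rfl⟩ := hv
        simpa only [e.injective.extend_apply] using commute_of (e.map_adj_iff.1 huv)
      · rw [extend_apply' _ _ _ hv]
        exact Commute.one_right _
    · rw [extend_apply' _ _ _ hu]
      exact Commute.one_left _
  have hρ : ρ.comp (map e.toHom) = MonoidHom.id _ := PresentedGroup.ext fun v => by
    change ρ (map e.toHom (of Γ v)) = of Γ v
    rw [map_of]
    exact (lift_of _ _ _).trans (e.injective.extend_apply _ _ _)
  exact LeftInverse.injective (g := ρ) (DFunLike.congr_fun hρ)

/-- A graph isomorphism induces an isomorphism of right-angled Artin groups. -/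
def mapEquiv (e : Γ ≃g Λ) : RAAG Γ ≃* RAAG Λ :=
  MonoidHom.toMulEquiv (map e.toHom) (map e.symm.toHom)
    (PresentedGroup.ext fun v => by
      change map e.symm.toHom (map e.toHom (of Γ v)) = of Γ v
      simp)
    (PresentedGroup.ext fun v => by
      change map e.toHom (map e.symm.toHom (of Λ v)) = of Λ v
      simp)

theorem mapEquiv_of (e : Γ ≃g Λ) (v : V) : mapEquiv e (of Γ v) = of Λ (e v) :=
  map_of e.toHom v

end RAAG

theorem EmbedsInOneRelator.raag_of_embedding {V W : Type} {Γ : SimpleGraph V} {Λ : SimpleGraph W}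
    (h : EmbedsInOneRelator (RAAG Λ)) (e : Γ ↪g Λ) : EmbedsInOneRelator (RAAG Γ) :=
  h.of_injective _ (RAAG.map_injective e)

/-! ### The two-way infinite path -/

section Line

open SimpleGraph

theorem hasse_int_adj {i j : ℤ} : (hasse ℤ).Adj i j ↔ i + 1 = j ∨ j + 1 = i := by
  simp only [hasse_adj, Order.covBy_iff_add_one_eq]

/-- Translation by one along the two-way infinite path. -/
noncomputable def lineShift : hasse ℤ ≃g hasse ℤ where
  toEquiv := Equiv.addRight 1
  map_rel_iff' := by
    simp only [hasse_int_adj, Equiv.coe_addRight]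
    omega

/-- The automorphism of `RAAG (hasse ℤ)` induced by translation. -/
noncomputable def lineShiftAut : MulAut (RAAG (hasse ℤ)) := RAAG.mapEquiv lineShift

theorem lineShiftAut_of (i : ℤ) :
    lineShiftAut (RAAG.of (hasse ℤ) i) = RAAG.of (hasse ℤ) (i + 1) :=
  RAAG.mapEquiv_of lineShift i

theorem lineShiftAut_zpow_of_zero (i : ℤ) :
    (lineShiftAut ^ i) (RAAG.of (hasse ℤ) 0) = RAAG.of (hasse ℤ) i := by
  induction i with
  | zero => rfl
  | succ i ih => rw [add_comm, zpow_one_add, MulAut.mul_apply, ih, lineShiftAut_of, add_comm]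
  | pred i ih =>
    apply lineShiftAut.injective
    rw [← MulAut.mul_apply, mul_self_zpow, lineShiftAut_of, sub_add_cancel, ih]

/-- The mapping torus of the translation of `RAAG (hasse ℤ)`, an HNN extension of that group. -/
abbrev LineExtension : Type :=
  RAAG (hasse ℤ) ⋊[zpowersHom (MulAut (RAAG (hasse ℤ))) lineShiftAut] Multiplicative ℤ

namespace LineExtension

open SemidirectProduct

/-- The stable letter. -/
noncomputable def stable : LineExtension := inr (Multiplicative.ofAdd 1)

theorem conj_stable_zpow (i : ℤ) :
    stable ^ i * inl (RAAG.of (hasse ℤ) 0) * (stable ^ i)⁻¹ =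
      (inl (RAAG.of (hasse ℤ) i) : LineExtension) := by
  rw [stable, ← map_zpow, ← map_inv, ← inl_aut, ← ofAdd_zsmul, smul_eq_mul, mul_one,
    zpowersHom_apply, toAdd_ofAdd, lineShiftAut_zpow_of_zero]

end LineExtension

theorem commute_conj_zpow_succ {G : Type*} [Group G] {a t : G} (h : Commute a (t * a * t⁻¹))
    (i : ℤ) : Commute (t ^ i * a * (t ^ i)⁻¹) (t ^ (i + 1) * a * (t ^ (i + 1))⁻¹) := by
  have := h.map (MulAut.conj (t ^ i)).toMonoidHom
  simp only [MulEquiv.toMonoidHom_eq_coe, MonoidHom.coe_coe, MulAut.conj_apply] at this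
  convert this using 1
  rw [zpow_add_one]
  group

theorem embedsInOneRelator_raag_hasse_int : EmbedsInOneRelator (RAAG (hasse ℤ)) := by
  let r : FreeGroup Bool :=
    let a := FreeGroup.of false
    let t := FreeGroup.of true
    a * (t * a * t⁻¹) * a⁻¹ * (t * a * t⁻¹)⁻¹
  let a : PresentedGroup {r} := PresentedGroup.of false
  let t : PresentedGroup {r} := PresentedGroup.of true
  have hat : Commute a (t * a * t⁻¹) :=
    commutatorElement_eq_one_iff_commute.1 (PresentedGroup.one_of_mem (rels := {r}) rfl)
  let Ψ : RAAG (hasse ℤ) →* PresentedGroup {r} :=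
    RAAG.lift (fun i => t ^ i * a * (t ^ i)⁻¹) <| by
      intro i j hij
      obtain rfl | rfl := hasse_int_adj.1 hij
      exacts [commute_conj_zpow_succ hat i, (commute_conj_zpow_succ hat j).symm]
  let A : LineExtension := SemidirectProduct.inl (RAAG.of (hasse ℤ) 0)
  let T : LineExtension := LineExtension.stable
  have hAT : Commute A (T * A * T⁻¹) := by
    have := LineExtension.conj_stable_zpow 1
    rw [zpow_one] at this
    rw [this]
    exact (RAAG.commute_of (hasse_int_adj.2 (by simp))).map SemidirectProduct.inl
  let Φ : PresentedGroup {r} →* LineExtension :=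
    PresentedGroup.toGroup (f := fun b => if b then T else A) <| by
      rintro _ rfl
      simpa only [r, commutatorElement_def, map_mul, map_inv, FreeGroup.lift_apply_of, if_true,
        Bool.false_eq_true, if_false] using commutatorElement_eq_one_iff_commute.2 hAT
  have hΦΨ : Φ.comp Ψ = SemidirectProduct.inl := PresentedGroup.ext fun i => by
    have ha : Φ a = A := PresentedGroup.toGroup.of _
    have ht : Φ t = T := PresentedGroup.toGroup.of _
    simp only [MonoidHom.comp_apply, Ψ, RAAG.lift_of, map_mul, map_inv, map_zpow, ha, ht]
    exact LineExtension.conj_stable_zpow i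
  refine ⟨Bool, r, Ψ, Injective.of_comp (f := Φ) ?_⟩
  rw [← MonoidHom.coe_comp, hΦΨ]
  exact SemidirectProduct.inl_injective

end Line

/-! ### Doubling along a star -/

section StarDouble

variable {L : Type} (Λ : SimpleGraph L) (q : L)

/-- The closed star of a vertex: the vertex together with its neighbours. -/
def closedStar : Set L := insert q (Λ.neighborSet q)

/-- The vertices of the double of a graph along the closed star of `q`. A vertex of the star is
represented with index `false` only. -/
abbrev DoubleVertex : Type := {z : L × Bool // z.2 = false ∨ z.1 ∉ closedStar Λ q}

/-- The double of a graph along the closed star of `q`: two copies of the graph, indexed by `Bool`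
and glued along the star. -/
def starDouble : SimpleGraph (DoubleVertex Λ q) where
  Adj z z' := Λ.Adj z.1.1 z'.1.1 ∧
    (z.1.2 = z'.1.2 ∨ z.1.1 ∈ closedStar Λ q ∨ z'.1.1 ∈ closedStar Λ q)
  symm := ⟨fun _ _ h => ⟨h.1.symm, by tauto⟩⟩
  loopless := ⟨fun _ h => Λ.loopless.irrefl _ h.1⟩

namespace starDouble

open RAAG

variable {Λ q}

open Classical in
variable (Λ q) in
/-- The inclusion of the copy of the graph with index `b` into the double. -/
noncomputable def copy (b : Bool) (y : L) : DoubleVertex Λ q :=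
  if h : y ∈ closedStar Λ q then ⟨(y, false), Or.inl rfl⟩ else ⟨(y, b), Or.inr h⟩

theorem copy_of_mem {b : Bool} {y : L} (h : y ∈ closedStar Λ q) :
    copy Λ q b y = ⟨(y, false), Or.inl rfl⟩ :=
  dif_pos h

theorem copy_of_notMem {b : Bool} {y : L} (h : y ∉ closedStar Λ q) :
    copy Λ q b y = ⟨(y, b), Or.inr h⟩ :=
  dif_neg h

theorem copy_fst (b : Bool) (y : L) : (copy Λ q b y).1.1 = y := by
  unfold copy
  split_ifs <;> rfl

theorem copy_false_snd (y : L) : (copy Λ q false y).1.2 = false := by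
  unfold copy
  split_ifs <;> rfl

theorem copy_eq_copy {y : L} (h : y ∈ closedStar Λ q) (b b' : Bool) :
    copy Λ q b y = copy Λ q b' y := by
  rw [copy_of_mem h, copy_of_mem h]

theorem copy_self (z : DoubleVertex Λ q) : copy Λ q z.1.2 z.1.1 = z := by
  obtain ⟨⟨y, b⟩, hyb⟩ := z
  by_cases hy : y ∈ closedStar Λ q
  · obtain rfl : b = false := by tauto
    exact copy_of_mem hy
  · exact copy_of_notMem hy

theorem copy_adj {b : Bool} {y y' : L} :
    (starDouble Λ q).Adj (copy Λ q b y) (copy Λ q b y') ↔ Λ.Adj y y' := by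
  simp only [starDouble, copy_fst, and_iff_left_iff_imp]
  intro _
  by_contra! h
  obtain ⟨hne, hy, hy'⟩ := h
  exact hne (by rw [copy_of_notMem hy, copy_of_notMem hy'])

theorem exists_copy_of_adj {z z' : DoubleVertex Λ q} (h : (starDouble Λ q).Adj z z') :
    ∃ b y y', Λ.Adj y y' ∧ copy Λ q b y = z ∧ copy Λ q b y' = z' := by
  obtain ⟨hadj, hb | hz | hz'⟩ := h
  · exact ⟨z.1.2, _, _, hadj, copy_self z, hb ▸ copy_self z'⟩
  · exact ⟨z'.1.2, _, _, hadj, (copy_eq_copy hz _ _).trans (copy_self z), copy_self z'⟩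
  · exact ⟨z.1.2, _, _, hadj, copy_self z, (copy_eq_copy hz' _ _).trans (copy_self z')⟩

open Classical in
variable (Λ q) in
/-- The generators of the index two subgroup of `RAAG Λ` consisting of the elements with even
exponent sum in `q`, before conjugation by powers of `q`. -/
noncomputable def evenGen (y : L) : RAAG Λ :=
  if y = q then of Λ q * of Λ q else of Λ y

theorem commute_of_evenGen {x y : L} (h : x = y ∨ Λ.Adj x y) :
    Commute (of Λ x) (evenGen Λ q y) := by
  have hxy : Commute (of Λ x) (of Λ y) := by
    obtain rfl | h := h
    exacts [Commute.refl _, commute_of h]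
  unfold evenGen
  split_ifs with hy
  · exact hy ▸ hxy.mul_right hxy
  · exact hxy

theorem commute_evenGen {y y' : L} (h : Λ.Adj y y') :
    Commute (evenGen Λ q y) (evenGen Λ q y') := by
  have hy' : Commute (of Λ y) (evenGen Λ q y') := commute_of_evenGen (Or.inr h)
  unfold evenGen at hy' ⊢
  split_ifs at hy' ⊢ with hy <;> subst_vars
  exacts [Commute.refl _, hy'.mul_left hy', hy', hy']

variable (Λ q) in
/-- Conjugation by the element of `RAAG Λ` that leads to the given copy of `Λ`. -/
def copyConj (b : Bool) : MulAut (RAAG Λ) := MulAut.conj (cond b (of Λ q)⁻¹ 1)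

variable (Λ q) in
/-- The image in `RAAG Λ` of the generator of `RAAG (starDouble Λ q)` attached to a vertex. -/
noncomputable def image (z : DoubleVertex Λ q) : RAAG Λ :=
  copyConj Λ q z.1.2 (evenGen Λ q z.1.1)

theorem image_copy (b : Bool) (y : L) :
    image Λ q (copy Λ q b y) = copyConj Λ q b (evenGen Λ q y) := by
  by_cases hy : y ∈ closedStar Λ q
  · have hc : Commute (of Λ q) (evenGen Λ q y) := commute_of_evenGen (hy.imp Eq.symm id)
    have hconj (b : Bool) : copyConj Λ q b (evenGen Λ q y) = evenGen Λ q y := by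
      cases b
      · simp [copyConj]
      · rw [copyConj, MulAut.conj_apply, cond_true, hc.inv_left.eq, mul_inv_cancel_right]
    rw [copy_of_mem hy, image, hconj, hconj]
  · rw [copy_of_notMem hy, image]

variable (Λ q) in
/-- The homomorphism identifying the right-angled Artin group of the double with the subgroup of
elements of even exponent sum in `q`. -/
noncomputable def toRAAG : RAAG (starDouble Λ q) →* RAAG Λ :=
  lift (image Λ q) <| by
    intro z z' h
    obtain ⟨b, y, y', hadj, rfl, rfl⟩ := exists_copy_of_adj h
    rw [image_copy, image_copy]
    exact (commute_evenGen hadj).map (copyConj Λ q b)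

theorem toRAAG_of (z : DoubleVertex Λ q) : toRAAG Λ q (of _ z) = image Λ q z :=
  lift_of _ _ z

open Classical in
variable (Λ q) in
/-- The permutation by which the generator `y` of `RAAG Λ` acts on two copies of the group
`RAAG (starDouble Λ q)`, as it acts by left multiplication on itself, decomposed into the cosets
of its index two subgroup. -/
noncomputable def sheetPerm (y : L) : Equiv.Perm (RAAG (starDouble Λ q) × Bool) :=
  if y = q then
    (Equiv.refl _).prodCongr Equiv.boolNot *
      Equiv.prodCongrLeft fun b => Equiv.mulLeft (cond b (of _ (copy Λ q false q)) 1)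
  else Equiv.prodCongrLeft fun b => Equiv.mulLeft (of _ (copy Λ q b y))

theorem sheetPerm_self_false (d : RAAG (starDouble Λ q)) :
    sheetPerm Λ q q (d, false) = (d, true) := by
  simp [sheetPerm]

theorem sheetPerm_self_true (d : RAAG (starDouble Λ q)) :
    sheetPerm Λ q q (d, true) = (of _ (copy Λ q false q) * d, false) := by
  simp [sheetPerm]

theorem sheetPerm_of_ne {y : L} (hy : y ≠ q) (d : RAAG (starDouble Λ q)) (b : Bool) :
    sheetPerm Λ q y (d, b) = (of _ (copy Λ q b y) * d, b) := by
  simp [sheetPerm, hy]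

theorem commute_sheetPerm_self {y : L} (h : Λ.Adj q y) :
    Commute (sheetPerm Λ q q) (sheetPerm Λ q y) := by
  have hy : copy Λ q true y = copy Λ q false y := copy_eq_copy (Or.inr h) _ _
  have hc : Commute (of _ (copy Λ q false q)) (of _ (copy Λ q false y)) :=
    commute_of (copy_adj.2 h)
  ext1 ⟨d, _ | _⟩
  · rw [Equiv.Perm.mul_apply, Equiv.Perm.mul_apply, sheetPerm_of_ne h.ne', sheetPerm_self_false,
      sheetPerm_self_false, sheetPerm_of_ne h.ne', hy]
  · rw [Equiv.Perm.mul_apply, Equiv.Perm.mul_apply, sheetPerm_of_ne h.ne', sheetPerm_self_true,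
      sheetPerm_self_true, sheetPerm_of_ne h.ne', hy, ← mul_assoc, ← mul_assoc, hc.eq]

theorem commute_sheetPerm {y y' : L} (h : Λ.Adj y y') :
    Commute (sheetPerm Λ q y) (sheetPerm Λ q y') := by
  by_cases hy : y = q
  · subst hy
    exact commute_sheetPerm_self h
  by_cases hy' : y' = q
  · subst hy'
    exact (commute_sheetPerm_self h.symm).symm
  ext1 ⟨d, b⟩
  have hc : Commute (of _ (copy Λ q b y)) (of _ (copy Λ q b y')) := commute_of (copy_adj.2 h)
  simp only [Equiv.Perm.mul_apply, sheetPerm_of_ne hy, sheetPerm_of_ne hy']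
  rw [← mul_assoc, ← mul_assoc, hc.eq]

variable (Λ q) in
/-- The action of `RAAG Λ` on two copies of `RAAG (starDouble Λ q)`. -/
noncomputable def sheetRep : RAAG Λ →* Equiv.Perm (RAAG (starDouble Λ q) × Bool) :=
  lift (sheetPerm Λ q) fun _ _ => commute_sheetPerm

theorem sheetRep_image (z : DoubleVertex Λ q) (d : RAAG (starDouble Λ q)) :
    sheetRep Λ q (image Λ q z) (d, false) = (of _ z * d, false) := by
  have hof (y : L) : sheetRep Λ q (of Λ y) = sheetPerm Λ q y := lift_of _ _ y
  obtain ⟨b, y, rfl⟩ : ∃ b y, copy Λ q b y = z := ⟨_, _, copy_self z⟩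
  rw [image_copy, copyConj, evenGen]
  by_cases hy : y = q
  · subst hy
    have hz : copy Λ y b y = copy Λ y false y := copy_eq_copy (Set.mem_insert _ _) _ _
    have hb : MulAut.conj (cond b (of Λ y)⁻¹ 1) (of Λ y * of Λ y) = of Λ y * of Λ y := by
      cases b <;> simp
    rw [if_pos rfl, hb, hz, map_mul, hof, Equiv.Perm.mul_apply, sheetPerm_self_false,
      sheetPerm_self_true]
  · rw [if_neg hy]
    cases b
    · simp [hof, sheetPerm_of_ne hy]
    · simp [hof, sheetPerm_of_ne hy, sheetPerm_self_false, Equiv.symm_apply_eq]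

theorem sheetRep_toRAAG (x d : RAAG (starDouble Λ q)) :
    sheetRep Λ q (toRAAG Λ q x) (d, false) = (x * d, false) := by
  have hx : x ∈ Subgroup.closure (Set.range (of (starDouble Λ q))) := by
    rw [PresentedGroup.closure_range_of]
    trivial
  induction hx using Subgroup.closure_induction generalizing d with
  | mem x hx =>
    obtain ⟨z, rfl⟩ := hx
    rw [toRAAG_of, sheetRep_image]
  | one => rw [map_one, map_one, Equiv.Perm.one_apply, one_mul]
  | mul x y _ _ hx hy => rw [map_mul, map_mul, Equiv.Perm.mul_apply, hy, hx, mul_assoc]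
  | inv x _ hx => rw [map_inv, map_inv, Equiv.Perm.inv_eq_iff_eq, hx, mul_inv_cancel_left]

theorem toRAAG_injective : Injective (toRAAG Λ q) := by
  refine (injective_iff_map_eq_one _).2 fun x hx => ?_
  have := sheetRep_toRAAG x 1
  rw [hx, map_one, Equiv.Perm.one_apply, mul_one] at this
  exact (congrArg Prod.fst this).symm

end starDouble

end StarDouble

theorem EmbedsInOneRelator.starDouble {L : Type} {Λ : SimpleGraph L}
    (h : EmbedsInOneRelator (RAAG Λ)) (q : L) : EmbedsInOneRelator (RAAG (starDouble Λ q)) :=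
  h.of_injective _ starDouble.toRAAG_injective

/-! ### Forests embed in iterated doubles of the path -/

/-- The graphs in which forests can be grown by doubling along stars: those of girth at least
five in which every vertex has two neighbours. -/
structure IsHost {L : Type} (Λ : SimpleGraph L) : Prop where
  not_triangle : ∀ a b c, Λ.Adj a b → Λ.Adj b c → ¬ Λ.Adj c a
  eq_of_square : ∀ a b c d, a ≠ c → Λ.Adj a b → Λ.Adj b c → Λ.Adj a d → Λ.Adj d c → b = d
  exists_two_neighbors : ∀ a, ∃ b c, b ≠ c ∧ Λ.Adj a b ∧ Λ.Adj a c

theorem isHost_hasse_int : IsHost (SimpleGraph.hasse ℤ) where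
  not_triangle a b c := by
    simp only [hasse_int_adj]
    omega
  eq_of_square a b c d := by
    simp only [hasse_int_adj]
    omega
  exists_two_neighbors a :=
    ⟨a + 1, a - 1, by omega, hasse_int_adj.2 (by omega), hasse_int_adj.2 (by omega)⟩

namespace IsHost

open starDouble

variable {L : Type} {Λ : SimpleGraph L} {q : L}

theorem base_adj_of_fst_eq {a b c : DoubleVertex Λ q} (hac : a ≠ c) (hfst : a.1.1 = c.1.1)
    (hab : (starDouble Λ q).Adj a b) (hbc : (starDouble Λ q).Adj b c) :
    Λ.Adj q b.1.1 ∧ a.1.1 ∉ closedStar Λ q ∧ b.1.2 = false := by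
  obtain ⟨⟨a, i⟩, ha⟩ := a
  obtain ⟨⟨b, k⟩, hb⟩ := b
  obtain ⟨⟨c, j⟩, hc⟩ := c
  obtain rfl : a = c := hfst
  obtain ⟨hab, hik⟩ := hab
  obtain ⟨-, hkj⟩ := hbc
  have hij : i ≠ j := by
    rintro rfl
    exact hac rfl
  have ha' : a ∉ closedStar Λ q := fun h =>
    hij ((ha.resolve_right (not_not.2 h)).trans (hc.resolve_right (not_not.2 h)).symm)
  have hb' : b ∈ closedStar Λ q := by
    by_contra h
    exact hij ((hik.resolve_right (by tauto)).trans (hkj.resolve_right (by tauto)))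
  refine ⟨hb'.resolve_left ?_, ha', hb.resolve_right (not_not.2 hb')⟩
  rintro rfl
  exact ha' (Or.inr hab.symm)

theorem starDouble (h : IsHost Λ) (q : L) : IsHost (starDouble Λ q) where
  not_triangle a b c hab hbc hca := h.not_triangle _ _ _ hab.1 hbc.1 hca.1
  exists_two_neighbors a := by
    obtain ⟨b, c, hbc, hb, hc⟩ := h.exists_two_neighbors a.1.1
    rw [← copy_self a]
    refine ⟨copy Λ q a.1.2 b, copy Λ q a.1.2 c, fun he => hbc ?_, copy_adj.2 hb, copy_adj.2 hc⟩
    rw [← copy_fst (Λ := Λ) (q := q) a.1.2 b, he, copy_fst]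
  eq_of_square a b c d hac hab hbc had hdc := by
    by_cases hfst : a.1.1 = c.1.1
    · obtain ⟨hqb, ha, hb⟩ := base_adj_of_fst_eq hac hfst hab hbc
      obtain ⟨hqd, -, hd⟩ := base_adj_of_fst_eq hac hfst had hdc
      have hbd : b.1.1 = d.1.1 :=
        h.eq_of_square _ _ q _ (fun e => ha (Or.inl e)) hab.1 hqb.symm had.1 hqd.symm
      exact Subtype.ext (Prod.ext hbd (hb.trans hd.symm))
    · have hbd : b.1.1 = d.1.1 := h.eq_of_square _ _ _ _ hfst hab.1 hbc.1 had.1 hdc.1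
      by_contra hne
      obtain ⟨hqa, hb, -⟩ := base_adj_of_fst_eq hne hbd hab.symm had
      obtain ⟨hqc, -, -⟩ := base_adj_of_fst_eq hne hbd hbc hdc.symm
      exact hfst (h.eq_of_square _ _ q _ (fun e => hb (Or.inl e)) hab.1.symm hqa.symm hbc.1
        hqc.symm)

end IsHost

/-- The graph obtained from `F` by adding a vertex whose only neighbour is `p`, or an isolated
vertex if `p` is `none`. -/
def addVertex {V : Type} (F : SimpleGraph V) (p : Option V) : SimpleGraph (Option V) where
  Adj
    | some u, some v => F.Adj u v
    | none, some v => some v = p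
    | some v, none => some v = p
    | none, none => False
  symm := ⟨by
    rintro (_ | u) (_ | v) h
    exacts [h, h, h, F.adj_symm h]⟩
  loopless := ⟨by
    rintro (_ | u) h
    exacts [h, F.irrefl h]⟩

/-- The property of being an induced subgraph of a host graph whose right-angled Artin group embeds
in a one-relator group. -/
def EmbedsInHost {V : Type} (F : SimpleGraph V) : Prop :=
  ∃ (L : Type) (Λ : SimpleGraph L), IsHost Λ ∧ EmbedsInOneRelator (RAAG Λ) ∧ Nonempty (F ↪g Λ)

namespace EmbedsInHost

variable {V W : Type} {F : SimpleGraph V} {F' : SimpleGraph W}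

theorem embedsInOneRelator (h : EmbedsInHost F) : EmbedsInOneRelator (RAAG F) := by
  obtain ⟨L, Λ, -, hΛ, ⟨e⟩⟩ := h
  exact hΛ.raag_of_embedding e

theorem of_embedding (h : EmbedsInHost F') (e : F ↪g F') : EmbedsInHost F := by
  obtain ⟨L, Λ, hhost, hΛ, ⟨e'⟩⟩ := h
  exact ⟨L, Λ, hhost, hΛ, ⟨e'.comp e⟩⟩

theorem of_subsingleton [Subsingleton V] (F : SimpleGraph V) : EmbedsInHost F := by
  refine ⟨ℤ, _, isHost_hasse_int, embedsInOneRelator_raag_hasse_int,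
    ⟨⟨⟨fun _ => 0, injective_of_subsingleton _⟩, fun {u v} => ?_⟩⟩⟩
  rw [Subsingleton.elim u v]
  simp only [SimpleGraph.irrefl]

open starDouble in
-- In the double along the star of a neighbour `q` of the image of `p`, the second copy of another
-- neighbour `y` is adjacent to no vertex of the first copy but the image of `p`.
theorem addVertex_some (h : EmbedsInHost F) (p : V) : EmbedsInHost (addVertex F (some p)) := by
  obtain ⟨L, Λ, hhost, hΛ, ⟨e⟩⟩ := h
  obtain ⟨q, y, hqy, hq, hy⟩ := hhost.exists_two_neighbors (e p)
  have hystar : y ∉ closedStar Λ q := by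
    rintro (rfl | h)
    exacts [hqy rfl, hhost.not_triangle _ _ _ hq h hy.symm]
  let f : Option V → DoubleVertex Λ q := fun o => o.elim (copy Λ q true y) (copy Λ q false ∘ e)
  have htrue : (copy Λ q true y).1.2 = true := by rw [copy_of_notMem hystar]
  have hnone (v : V) : (starDouble Λ q).Adj (f none) (f (some v)) ↔ some v = some p := by
    change Λ.Adj _ _ ∧ _ ↔ _
    simp only [f, Option.elim, comp_apply, copy_fst, copy_false_snd, htrue,
      Bool.true_eq_false, false_or, hystar, Option.some_inj]
    constructor
    · rintro ⟨hyv, hv | hv⟩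
      · exact absurd (Or.inr (hv ▸ hyv.symm)) hystar
      · exact e.injective (hhost.eq_of_square y _ q _ hqy.symm hyv hv.symm hy.symm hq)
    · rintro rfl
      exact ⟨hy.symm, Or.inr hq.symm⟩
  refine ⟨_, starDouble Λ q, hhost.starDouble q, hΛ.starDouble q, ⟨⟨⟨f, ?_⟩, ?_⟩⟩⟩
  · rintro (_ | u) (_ | v) huv
    · rfl
    · exact absurd (congrArg (·.1.2) huv) (by simp [f, copy_false_snd, htrue])
    · exact absurd (congrArg (·.1.2) huv) (by simp [f, copy_false_snd, htrue])
    · refine congrArg some (e.injective ?_)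
      simpa only [f, Option.elim, comp_apply, copy_fst] using congrArg (·.1.1) huv
  · rintro (_ | u) (_ | v)
    · exact iff_of_false (SimpleGraph.irrefl _) id
    · exact hnone v
    · exact (SimpleGraph.adj_comm _ _ _).trans (hnone u)
    · exact copy_adj.trans e.map_adj_iff

theorem addVertex (h : EmbedsInHost F) (p : Option V) : EmbedsInHost (addVertex F p) := by
  obtain _ | p := p
  · cases isEmpty_or_nonempty V with
    | inl hV => exact of_subsingleton _
    | inr hV =>
      let p : V := Classical.arbitrary V
      refine ((h.addVertex_some p).addVertex_some none).of_embedding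
        ⟨⟨Option.map some, Option.map_injective (Option.some_injective _)⟩, ?_⟩
      rintro (_ | u) (_ | v)
      · rfl
      · simp [_root_.addVertex]
      · simp [_root_.addVertex]
      · rfl
  · exact h.addVertex_some p

end EmbedsInHost

theorem exists_leaf {V : Type} [Finite V] [Nontrivial V] {Γ : SimpleGraph V}
    (h : Γ.IsAcyclic) : ∃ x, ∀ u v, Γ.Adj x u → Γ.Adj x v → u = v := by
  classical
  have := Fintype.ofFinite V
  obtain ⟨T, hΓT, hT⟩ := SimpleGraph.exists_maximal_isAcyclic_of_le_isAcyclic le_top h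
  have htree : T.IsTree := by
    simpa only [le_top, true_and, SimpleGraph.maximal_isAcyclic_iff_isTree] using hT
  obtain ⟨x, hx⟩ := htree.exists_vert_degree_one_of_nontrivial
  rw [SimpleGraph.degree_eq_one_iff_existsUnique_adj] at hx
  exact ⟨x, fun u v hu hv => hx.unique (hΓT hu) (hΓT hv)⟩

theorem exists_iso_addVertex {V : Type} {Γ : SimpleGraph V} {x : V}
    (hx : ∀ u v, Γ.Adj x u → Γ.Adj x v → u = v) :
    ∃ p, Nonempty (addVertex (Γ.induce {y | y ≠ x}) p ≃g Γ) := by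
  classical
  obtain ⟨p, hp⟩ : ∃ p, ∀ v : {y | y ≠ x}, some v = p ↔ Γ.Adj x v := by
    by_cases h : ∃ u, Γ.Adj x u
    · obtain ⟨u, hu⟩ := h
      refine ⟨some ⟨u, hu.ne'⟩, fun v => ?_⟩
      rw [Option.some_inj, Subtype.ext_iff]
      exact ⟨fun hv => hv ▸ hu, fun hv => hx _ _ hv hu⟩
    · exact ⟨none, fun v => iff_of_false (Option.some_ne_none v) fun hv => h ⟨v, hv⟩⟩
  refine ⟨p, ⟨⟨Equiv.optionSubtypeNe x, ?_⟩⟩⟩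
  rintro (_ | u) (_ | v)
  · exact iff_of_false Γ.irrefl id
  · exact (hp v).symm
  · exact (Γ.adj_comm _ _).trans (hp u).symm
  · rfl

theorem embedsInHost_of_isAcyclic {V : Type} [Finite V] {Γ : SimpleGraph V} (h : Γ.IsAcyclic) :
    EmbedsInHost Γ := by
  induction hn : Nat.card V using Nat.strong_induction_on generalizing V with
  | _ n ih =>
    cases subsingleton_or_nontrivial V with
    | inl hV => exact .of_subsingleton Γ
    | inr hV =>
      obtain ⟨x, hx⟩ := exists_leaf h
      obtain ⟨p, ⟨e⟩⟩ := exists_iso_addVertex hx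
      have hcard : Nat.card {y | y ≠ x} < n :=
        hn ▸ Finite.card_subtype_lt (x := x) (not_not.2 rfl)
      exact ((ih _ hcard (h.induce _) rfl).addVertex p).of_embedding e.symm.toEmbedding

/-! ### Stackings of cyclic words -/

section Stacking

variable {B : Type*} {l : ℕ}

/-- The inverse of a letter of a free group, `(b, true)` standing for `b` and `(b, false)` for
`b⁻¹` as in `FreeGroup.mk`. -/
def letterInv (a : B × Bool) : B × Bool := (a.1, !a.2)

theorem letterInv_letterInv (a : B × Bool) : letterInv (letterInv a) = a := by
  simp [letterInv]

theorem letterInv_ne_self (a : B × Bool) : letterInv a ≠ a := fun h => by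
  simpa [letterInv] using congrArg Prod.snd h

/-- A cyclic word is reduced if no letter is followed by its inverse. -/
def IsReducedWord (w : ZMod l → B × Bool) : Prop :=
  ∀ i, w (i + 1) ≠ letterInv (w i)

/-- A cyclic word is primitive if it is not a proper power, that is, has no rotational symmetry. -/
def IsPrimitiveWord (w : ZMod l → B × Bool) : Prop :=
  ∀ k, (∀ i, w (i + k) = w i) → k = 0

/-- The origin of the `i`-th edge of the cycle on which the word `w` is read, oriented by the
generator that labels it. -/
def edgeSrc (w : ZMod l → B × Bool) (i : ZMod l) : ZMod l := cond (w i).2 i (i + 1)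

/-- The end of the `i`-th edge of the cycle on which the word `w` is read, oriented by the
generator that labels it. -/
def edgeTgt (w : ZMod l → B × Bool) (i : ZMod l) : ZMod l := cond (w i).2 (i + 1) i

/-- A compatible height function on the vertices of the cycle on which the word `w` is read: edges
with the same label are stacked at their origins in the same order as at their ends. If it is
injective, it is a stacking of `w` in the sense of Louder and Wilton. -/
def IsCompatibleHeight (w : ZMod l → B × Bool) (t : ZMod l → ℚ) : Prop :=
  ∀ i j, (w i).1 = (w j).1 → (t (edgeSrc w i) < t (edgeSrc w j) ↔ t (edgeTgt w i) < t (edgeTgt w j))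

/-- The class of the `i`-th edge when edges with the same label and the same heights are
identified. -/
def edgeKey (w : ZMod l → B × Bool) (t : ZMod l → ℚ) (i : ZMod l) : B × ℚ :=
  ((w i).1, t (edgeSrc w i))

variable {w : ZMod l → B × Bool} {t : ZMod l → ℚ}

theorem IsReducedWord.apply_ne (hw : IsReducedWord w) (i : ZMod l) :
    w i ≠ letterInv (w (i - 1)) := by
  simpa only [sub_add_cancel] using hw (i - 1)

theorem IsReducedWord.not_reflection (hw : IsReducedWord w) [NeZero l] (s : ZMod l) :
    ¬ ∀ x, w x = letterInv (w (s - x)) := by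
  intro h
  obtain ⟨k, hk | hk⟩ := s.val.even_or_odd'
  · have hs : s - k = (k : ZMod l) := by
      rw [← ZMod.natCast_zmod_val s, hk]
      push_cast
      ring
    exact letterInv_ne_self _ (hs ▸ h k).symm
  · have hs : s - (k + 1) = (k : ZMod l) := by
      rw [← ZMod.natCast_zmod_val s, hk]
      push_cast
      ring
    exact hw k (by rw [h (k + 1), hs])

namespace IsCompatibleHeight

theorem src_eq_iff (ht : IsCompatibleHeight w t) {i j : ZMod l} (hij : (w i).1 = (w j).1) :
    t (edgeSrc w i) = t (edgeSrc w j) ↔ t (edgeTgt w i) = t (edgeTgt w j) := by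
  simp only [le_antisymm_iff, ← not_lt, ht i j hij, ht j i hij.symm]

theorem succ_eq_succ (ht : IsCompatibleHeight w t) {i j : ZMod l} (hw : w i = w j)
    (hij : t i = t j) : t (i + 1) = t (j + 1) := by
  have := ht.src_eq_iff (congrArg Prod.fst hw)
  cases hi : (w i).2 <;> simp_all [edgeSrc, edgeTgt]

theorem succ_eq_pred (ht : IsCompatibleHeight w t) {i j : ZMod l}
    (hw : w i = letterInv (w (j - 1))) (hij : t i = t j) : t (i + 1) = t (j - 1) := by
  have := ht.src_eq_iff (i := i) (j := j - 1) (by rw [hw, letterInv])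
  cases hi : (w (j - 1)).2 <;> simp_all [edgeSrc, edgeTgt, letterInv]

theorem perturb (ht : IsCompatibleHeight w t) {h : ZMod l → ℚ}
    {c : B × ℚ → ℚ} (hc : ∀ i, h (edgeTgt w i) - h (edgeSrc w i) = c (edgeKey w t i)) {ε : ℚ}
    (hε : ∀ i j, t i < t j → t i + ε * h i < t j + ε * h j) :
    IsCompatibleHeight w fun i => t i + ε * h i := by
  intro i j hij
  dsimp only
  obtain hlt | heq | hgt := lt_trichotomy (t (edgeSrc w i)) (t (edgeSrc w j))
  · exact iff_of_true (hε _ _ hlt) (hε _ _ ((ht i j hij).1 hlt))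
  · have htgt := (ht.src_eq_iff hij).1 heq
    have hkey : c (edgeKey w t i) = c (edgeKey w t j) := by
      rw [edgeKey, edgeKey, hij, heq]
    have hi := hc i
    have hj := hc j
    rw [heq, htgt, add_lt_add_iff_left, add_lt_add_iff_left, ← sub_pos, ← sub_pos (a := ε * _),
      ← mul_sub, ← mul_sub, show h (edgeTgt w j) - h (edgeTgt w i) =
        h (edgeSrc w j) - h (edgeSrc w i) by linarith]
  · exact iff_of_false (hε _ _ hgt).not_gt (hε _ _ ((ht j i hij.symm).1 hgt)).not_gt

end IsCompatibleHeight

/-- The unordered pair of letters by which the cyclic word `w` leaves its `i`-th vertex. -/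
def turn (w : ZMod l → B × Bool) (i : ZMod l) : Sym2 (B × Bool) := s(w i, letterInv (w (i - 1)))

theorem turn_add_one (i : ZMod l) : turn w (i + 1) = s(w (i + 1), letterInv (w i)) := by
  rw [turn, add_sub_cancel_right]

variable [NeZero l]

-- If vertices at the same height have the same turns, two of them force a symmetry of the word:
-- a rotation if they are passed in the same direction, a reflection otherwise.
theorem injective_of_turn_eq (hred : IsReducedWord w) (hprim : IsPrimitiveWord w)
    (ht : IsCompatibleHeight w t) (hturn : ∀ i j, t i = t j → turn w i = turn w j) :
    Injective t := by
  intro i j hij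
  obtain ⟨hw, -⟩ | ⟨hw, -⟩ := Sym2.eq_iff.1 (hturn i j hij)
  · have hn (n : ℕ) : t (i + n) = t (j + n) ∧ w (i + n) = w (j + n) := by
      induction n with
      | zero => simp [hij, hw]
      | succ n ih =>
        have hn := ht.succ_eq_succ ih.2 ih.1
        have := hturn _ _ hn
        rw [turn_add_one, turn_add_one, ih.2, Sym2.congr_left] at this
        simpa only [Nat.cast_succ, ← add_assoc] using ⟨hn, this⟩
    refine sub_eq_zero.1 (hprim (i - j) fun x => ?_)
    have := (hn (x - j).val).2
    rwa [ZMod.natCast_zmod_val, add_sub_cancel, add_sub_left_comm] at this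
  · have hn (n : ℕ) : t (i + n) = t (j - n) ∧ w (i + n) = letterInv (w (j - n - 1)) := by
      induction n with
      | zero => simp [hij, hw]
      | succ n ih =>
        have hn := ht.succ_eq_pred ih.2 ih.1
        have := hturn _ _ hn
        rw [turn_add_one, turn, ih.2, letterInv_letterInv, Sym2.eq_swap, Sym2.congr_right] at this
        simpa only [Nat.cast_succ, ← add_assoc, sub_add_eq_sub_sub] using ⟨hn, this⟩
    refine (hred.not_reflection (i + j - 1) fun x => ?_).elim
    have := (hn (x - i).val).2
    rw [ZMod.natCast_zmod_val, add_sub_cancel] at this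
    rw [this]
    congr 2
    ring

section Count

open Finset

variable [DecidableEq B]

/-- The oriented edge classes issuing from the heights of `t`: the elements `(h, a)` where the
letter `a` leads away from the height `h`. -/
def directions (w : ZMod l → B × Bool) (t : ZMod l → ℚ) : Finset (ℚ × (B × Bool)) :=
  univ.image (fun i => (t (edgeSrc w i), ((w i).1, true))) ∪
    univ.image fun i => (t (edgeTgt w i), ((w i).1, false))

theorem card_image_le_card_image {ι α β : Type*} [Fintype ι] [DecidableEq α] [DecidableEq β]
    {f : ι → α} {g : ι → β} (h : ∀ i j, g i = g j → f i = f j) :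
    #(univ.image f) ≤ #(univ.image g) := by
  cases isEmpty_or_nonempty ι with
  | inl _ => simp
  | inr _ =>
    refine (card_le_card fun a ha => ?_).trans (card_image_le (f := f ∘ invFun g))
    obtain ⟨i, -, rfl⟩ := mem_image.1 ha
    exact mem_image.2 ⟨g i, mem_image_of_mem g (mem_univ i), h _ _ (invFun_eq ⟨i, rfl⟩)⟩

theorem card_directions_le (ht : IsCompatibleHeight w t) :
    #(directions w t) ≤ 2 * #(univ.image (edgeKey w t)) := by
  rw [two_mul]
  refine (card_union_le _ _).trans (add_le_add ?_ ?_) <;>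
    refine card_image_le_card_image fun i j hij => ?_ <;>
    obtain ⟨hlabel, hsrc⟩ := Prod.ext_iff.1 hij <;>
    dsimp only [edgeKey] at hlabel hsrc
  · rw [hlabel, hsrc]
  · rw [hlabel, (ht.src_eq_iff hlabel).1 hsrc]

theorem mem_directions_of_mem_turn {i : ZMod l} {a : B × Bool} (ha : a ∈ turn w i) :
    (t i, a) ∈ directions w t := by
  simp only [directions, mem_union, mem_image, mem_univ, true_and]
  obtain rfl | rfl := Sym2.mem_iff.1 ha
  · cases h : (w i).2
    · exact Or.inr ⟨i, Prod.ext (by simp [edgeTgt, h]) (Prod.ext rfl h.symm)⟩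
    · exact Or.inl ⟨i, Prod.ext (by simp [edgeSrc, h]) (Prod.ext rfl h.symm)⟩
  · cases h : (w (i - 1)).2
    · exact Or.inl ⟨i - 1, by simp [edgeSrc, letterInv, h]⟩
    · exact Or.inr ⟨i - 1, by simp [edgeTgt, letterInv, h]⟩

-- There are at most twice as many directions as edge classes, and each height has at least the
-- two directions of a turn; a height with two different turns has a third one.
theorem card_heights_lt_card_edges (hred : IsReducedWord w) (ht : IsCompatibleHeight w t)
    {i j : ZMod l} (hij : t i = t j) (hturn : turn w i ≠ turn w j) :
    #(univ.image t) < #(univ.image (edgeKey w t)) := by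
  let fiber (h : ℚ) : Finset (ℚ × (B × Bool)) := {x ∈ directions w t | x.1 = h}
  let pair (k : ZMod l) : Finset (ℚ × (B × Bool)) := (turn w k).toFinset.image (Prod.mk (t k))
  have hcard (k) : #(pair k) = 2 := by
    rw [card_image_of_injective _ (Prod.mk_right_injective _)]
    exact Sym2.card_toFinset_of_not_isDiag _ fun h => hred.apply_ne k (Sym2.mk_isDiag_iff.1 h)
  have hpair (k) : pair k ⊆ fiber (t k) := by
    intro x hx
    obtain ⟨a, ha, rfl⟩ := mem_image.1 hx
    exact mem_filter.2 ⟨mem_directions_of_mem_turn (Sym2.mem_toFinset.1 ha), rfl⟩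
  have htwo : ∀ h ∈ univ.image t, 2 ≤ #(fiber h) := by
    intro h hh
    obtain ⟨k, -, rfl⟩ := mem_image.1 hh
    exact (hcard k).symm.trans_le (card_le_card (hpair k))
  have hthree : 2 < #(fiber (t i)) := by
    by_contra! hle
    have hi := eq_of_subset_of_card_le (hpair i) (hle.trans (hcard i).ge)
    have hj : (turn w j).toFinset.image (Prod.mk (t i)) = fiber (t i) := by
      rw [hij] at hle ⊢
      exact eq_of_subset_of_card_le (hpair j) (hle.trans (hcard j).ge)
    have heq : (turn w i).toFinset = (turn w j).toFinset :=
      image_injective (Prod.mk_right_injective (t i)) (hi.trans hj.symm)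
    exact hturn (Sym2.ext fun a => by rw [← Sym2.mem_toFinset, heq, Sym2.mem_toFinset])
  have hlt : 2 * #(univ.image t) < #(directions w t) := by
    rw [card_eq_sum_card_fiberwise (f := Prod.fst) (t := univ.image t), mul_comm, ← smul_eq_mul,
      ← sum_const]
    · exact sum_lt_sum htwo ⟨t i, mem_image_of_mem t (mem_univ i), hthree⟩
    · intro x hx
      simp only [directions, coe_union, coe_image] at hx
      obtain ⟨k, -, rfl⟩ | ⟨k, -, rfl⟩ := hx <;> simp
  have := card_directions_le ht
  omega

end Count

section Perturbation

open Finset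

theorem exists_apply_eq_comp_of_card_lt {ι κ ν : Type*} [Fintype ι] [DecidableEq κ] [DecidableEq ν]
    (Δ : (ι → ℚ) →ₗ[ℚ] (ι → ℚ)) {p : ι → ν} {e : ι → κ}
    (hcard : #(univ.image p) < #(univ.image e)) :
    ∃ (h : ι → ℚ) (c : κ → ℚ), Δ h = c ∘ e ∧ ∃ i j, p i = p j ∧ h i ≠ h j := by
  let e' (i : ι) : univ.image e := ⟨e i, mem_image_of_mem e (mem_univ i)⟩
  have hσ (v : univ.image p) : ∃ i, p i = v := by
    obtain ⟨i, -, hi⟩ := mem_image.1 v.2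
    exact ⟨i, hi⟩
  choose σ hσ using hσ
  let Θ : ((ι → ℚ) × (univ.image e → ℚ)) →ₗ[ℚ] (ι → ℚ) × (univ.image p → ℚ) :=
    (Δ.comp (LinearMap.fst ℚ _ _) - (LinearMap.funLeft ℚ ℚ e').comp (LinearMap.snd ℚ _ _)).prod
      ((LinearMap.funLeft ℚ ℚ σ).comp (LinearMap.fst ℚ _ _))
  have hker : LinearMap.ker Θ ≠ ⊥ := LinearMap.ker_ne_bot_of_finrank_lt <| by
    simpa using hcard
  obtain ⟨⟨h, c⟩, hhc, hne⟩ := Submodule.exists_mem_ne_zero_of_ne_bot hker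
  obtain ⟨hΔ, hσ0⟩ : Δ h - c ∘ e' = 0 ∧ h ∘ σ = 0 := Prod.ext_iff.1 hhc
  refine ⟨h, extend (↑) c 0, ?_, ?_⟩
  · funext i
    exact (congrFun (sub_eq_zero.1 hΔ) i).trans
      (Subtype.val_injective.extend_apply c 0 (e' i)).symm
  · by_contra! hp
    have h0 : h = 0 := funext fun i => by
      rw [hp i _ (hσ ⟨p i, mem_image_of_mem p (mem_univ i)⟩).symm]
      exact congrFun hσ0 _
    have hc0 : c = 0 := funext fun ⟨k, hk⟩ => by
      obtain ⟨i, -, rfl⟩ := mem_image.1 hk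
      simpa [h0] using congrFun hΔ i
    exact hne (Prod.ext h0 hc0)

theorem exists_pos_perturbation {ι : Type*} [Finite ι] (t h : ι → ℚ) :
    ∃ ε > 0, ∀ i j, t i < t j → t i + ε * h i < t j + ε * h j := by
  have hev : ∀ᶠ ε in nhdsWithin (0 : ℚ) (Set.Ioi 0), ∀ i j, t i < t j →
      t i + ε * h i < t j + ε * h j := by
    simp only [Filter.eventually_all]
    intro i j hij
    have hcont (k) : Continuous fun ε : ℚ => t k + ε * h k := by fun_prop
    refine Filter.Eventually.filter_mono nhdsWithin_le_nhds ?_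
    exact (hcont i).continuousAt.eventually_lt (hcont j).continuousAt (by simpa using hij)
  obtain ⟨ε, hε, hpos⟩ := (hev.and self_mem_nhdsWithin).exists
  exact ⟨ε, hpos, hε⟩

/-- The change of a function along the edges of the cycle on which `w` is read. -/
def edgeIncrement (w : ZMod l → B × Bool) : (ZMod l → ℚ) →ₗ[ℚ] (ZMod l → ℚ) :=
  LinearMap.funLeft ℚ ℚ (edgeTgt w) - LinearMap.funLeft ℚ ℚ (edgeSrc w)

-- A compatible height function with the fewest coincidences is injective: otherwise it takes fewer
-- values than there are edge classes, so it has a compatible perturbation separating some vertices.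
theorem exists_stacking (hred : IsReducedWord w) (hprim : IsPrimitiveWord w) :
    ∃ t : ZMod l → ℚ, Injective t ∧ IsCompatibleHeight w t := by
  classical
  let coincidences (t : ZMod l → ℚ) : Finset (ZMod l × ZMod l) := {x | t x.1 = t x.2}
  obtain ⟨t, ht, hmin⟩ := (measure fun t => #(coincidences t)).wf.has_min
    {t | IsCompatibleHeight w t} ⟨0, fun _ _ _ => Iff.rfl⟩
  refine ⟨t, injective_of_turn_eq hred hprim ht fun i j hij => ?_, ht⟩
  by_contra hturn
  obtain ⟨h, c, hc, x, y, hxy, hne⟩ := exists_apply_eq_comp_of_card_lt (edgeIncrement w)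
    (card_heights_lt_card_edges hred ht hij hturn)
  obtain ⟨ε, hpos, hε⟩ := exists_pos_perturbation t h
  refine hmin (fun i => t i + ε * h i) (ht.perturb (congrFun hc) hε)
    (card_lt_card ((ssubset_iff_of_subset ?_).2 ?_))
  · intro z hz
    obtain ⟨i, j⟩ := z
    simp only [coincidences, mem_filter, mem_univ, true_and] at hz ⊢
    by_contra hne
    obtain hlt | hlt := lt_or_gt_of_ne hne
    exacts [(hε _ _ hlt).ne hz, (hε _ _ hlt).ne' hz]
  · exact ⟨(x, y), by simpa [coincidences] using hxy, by
      simpa [coincidences, hxy, hpos.ne'] using hne⟩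

end Perturbation

end Stacking

/-! ### Cycles in Schreier graphs -/

section SchreierGraph

variable {B X : Type*} [MulAction (FreeGroup B) X]

/-- The boundary map of the Schreier graph of an action of a free group: the pair `(x, b)` is the
edge from `x` to `FreeGroup.of b • x`. -/
noncomputable def boundary : (X × B →₀ ℚ) →ₗ[ℚ] (X →₀ ℚ) :=
  Finsupp.linearCombination ℚ fun e =>
    Finsupp.single (FreeGroup.of e.2 • e.1) 1 - Finsupp.single e.1 1

theorem boundary_single (e : X × B) (a : ℚ) : boundary (Finsupp.single e a) =
    a • (Finsupp.single (FreeGroup.of e.2 • e.1) 1 - Finsupp.single e.1 1) :=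
  Finsupp.linearCombination_single _ _ _

/-- The cycles of the Schreier graph supported on a set of edges. -/
noncomputable def cyclesIn (E : Set (X × B)) : Submodule ℚ (X × B →₀ ℚ) :=
  Finsupp.supported ℚ ℚ E ⊓ LinearMap.ker boundary

theorem cyclesIn_mono {E E' : Set (X × B)} (h : E ⊆ E') : cyclesIn E ≤ cyclesIn E' :=
  inf_le_inf_right _ (Finsupp.supported_mono h)

theorem finrank_supported {α : Type*} (s : Finset α) :
    Module.finrank ℚ (Finsupp.supported ℚ ℚ (s : Set α)) = s.card := by
  rw [(Finsupp.supportedEquivFinsupp (s : Set α)).finrank_eq, Module.finrank_finsupp_self]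
  simp

instance finiteDimensional_supported {α : Type*} (s : Finset α) :
    FiniteDimensional ℚ (Finsupp.supported ℚ ℚ (s : Set α)) :=
  Module.Finite.equiv (Finsupp.supportedEquivFinsupp (s : Set α)).symm

theorem finiteDimensional_cyclesIn (E : Finset (X × B)) :
    FiniteDimensional ℚ (cyclesIn (E : Set (X × B))) :=
  Submodule.finiteDimensional_inf_left _ _

theorem linearCombination_one_boundary (c : X × B →₀ ℚ) :
    Finsupp.linearCombination ℚ (fun _ : X => (1 : ℚ)) (boundary c) = 0 := by
  induction c using Finsupp.induction_linear with
  | zero => rw [map_zero, map_zero]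
  | add c d hc hd => rw [map_add, map_add, hc, hd, add_zero]
  | single e a =>
    rw [boundary_single, map_smul, map_sub, Finsupp.linearCombination_single,
      Finsupp.linearCombination_single, sub_self, smul_zero]

-- The boundaries have coefficient sum zero, so they form a proper subspace of the vertex chains.
theorem card_edges_lt_card_vertices_add_finrank_cyclesIn {V : Finset X} {E : Finset (X × B)}
    (hV : V.Nonempty) (hE : ∀ e ∈ E, e.1 ∈ V ∧ FreeGroup.of e.2 • e.1 ∈ V) :
    E.card < V.card + Module.finrank ℚ (cyclesIn (E : Set (X × B))) := by
  let f := boundary.domRestrict (Finsupp.supported ℚ ℚ (E : Set (X × B)))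
  have hker : Module.finrank ℚ (LinearMap.ker f) =
      Module.finrank ℚ (cyclesIn (E : Set (X × B))) := by
    rw [cyclesIn, ← Submodule.map_comap_subtype, Submodule.finrank_map_subtype_eq,
      LinearMap.ker_domRestrict]
  have hrange : LinearMap.range f < Finsupp.supported ℚ ℚ (V : Set X) := by
    refine SetLike.lt_iff_le_and_exists.2 ⟨?_, ?_⟩
    · rw [LinearMap.range_domRestrict, Submodule.map_le_iff_le_comap,
        Finsupp.supported_eq_span_single, Submodule.span_le]
      rintro _ ⟨e, he, rfl⟩
      rw [SetLike.mem_coe, Submodule.mem_comap, boundary_single, one_smul]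
      exact Submodule.sub_mem _ (Finsupp.single_mem_supported ℚ _ (hE e he).2)
        (Finsupp.single_mem_supported ℚ _ (hE e he).1)
    · obtain ⟨v, hv⟩ := hV
      refine ⟨Finsupp.single v 1, Finsupp.single_mem_supported ℚ _ hv, ?_⟩
      rintro ⟨c, hc⟩
      have := linearCombination_one_boundary c.1
      rw [show boundary c.1 = Finsupp.single v 1 from hc, Finsupp.linearCombination_single] at this
      norm_num at this
  have hrank := f.finrank_range_add_finrank_ker
  have hlt := Submodule.finrank_lt_finrank_of_lt hrange
  rw [finrank_supported] at hrank hlt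
  omega

end SchreierGraph

/-! ### Cells glued along a stacked word -/

section Strands

open Finset

variable {B X : Type*} [MulAction (FreeGroup B) X] {l : ℕ} (w : ZMod l → B × Bool)

/-- The paths labelled by the periodic word `w` in the Schreier graph of an action on `X` are
recorded by strands `(x, i)`, standing for a passage through the vertex `x` that continues with the
`i`-th letter. The permutation `strandShift w` moves a strand along the edge with this letter. -/
def strandShift : Equiv.Perm (X × ZMod l) where
  toFun p := (FreeGroup.mk [w p.2] • p.1, p.2 + 1)
  invFun p := ((FreeGroup.mk [w (p.2 - 1)])⁻¹ • p.1, p.2 - 1)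
  left_inv p := by simp [-FreeGroup.inv_mk]
  right_inv p := by simp [-FreeGroup.inv_mk]

/-- Of a strand and its successor, the one at the origin of the edge between them. -/
def srcStrand (p : X × ZMod l) : X × ZMod l := cond (w p.2).2 p (strandShift w p)

/-- Of a strand and its successor, the one at the end of the edge between them. -/
def tgtStrand (p : X × ZMod l) : X × ZMod l := cond (w p.2).2 (strandShift w p) p

/-- The edge from a strand to its successor. -/
def crossedEdge (p : X × ZMod l) : X × B := ((srcStrand w p).1, (w p.2).1)

/-- The edge from a strand to its successor, with sign, as a chain. -/
noncomputable def strandChain (p : X × ZMod l) : X × B →₀ ℚ :=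
  Finsupp.single (crossedEdge w p) (cond (w p.2).2 1 (-1))

variable {w}

theorem strandShift_snd (p : X × ZMod l) : (strandShift w p).2 = p.2 + 1 := rfl

theorem strandShift_pow_snd (p : X × ZMod l) (n : ℕ) : ((strandShift w ^ n) p).2 = p.2 + n := by
  induction n with
  | zero => simp
  | succ n ih =>
    rw [pow_succ', Equiv.Perm.mul_apply, strandShift_snd, ih, Nat.cast_succ, add_assoc]

theorem srcStrand_snd (p : X × ZMod l) : (srcStrand w p).2 = edgeSrc w p.2 := by
  unfold srcStrand edgeSrc
  cases (w p.2).2 <;> rfl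

theorem tgtStrand_snd (p : X × ZMod l) : (tgtStrand w p).2 = edgeTgt w p.2 := by
  unfold tgtStrand edgeTgt
  cases (w p.2).2 <;> rfl

theorem mk_letter_of_snd_eq_true {a : B × Bool} (h : a.2 = true) :
    FreeGroup.mk [a] = FreeGroup.of a.1 := by
  rw [← Prod.mk.eta (p := a), h]
  rfl

theorem mk_letter_of_snd_eq_false {a : B × Bool} (h : a.2 = false) :
    FreeGroup.mk [a] = (FreeGroup.of a.1)⁻¹ := by
  rw [← Prod.mk.eta (p := a), h]
  rfl

theorem tgtStrand_fst (p : X × ZMod l) :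
    (tgtStrand w p).1 = FreeGroup.of (crossedEdge w p).2 • (crossedEdge w p).1 := by
  cases h : (w p.2).2
  · simp [tgtStrand, crossedEdge, srcStrand, strandShift, h, mk_letter_of_snd_eq_false h]
  · simp [tgtStrand, crossedEdge, srcStrand, strandShift, h, mk_letter_of_snd_eq_true h]

theorem eq_of_crossedEdge_eq {p q : X × ZMod l} (h : crossedEdge w p = crossedEdge w q)
    (hpq : p.2 = q.2) : p = q := by
  obtain ⟨x, i⟩ := p
  obtain ⟨y, j⟩ := q
  obtain rfl : i = j := hpq
  cases hi : (w i).2 <;>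
    simpa [crossedEdge, srcStrand, strandShift, hi] using congrArg Prod.fst h

theorem boundary_strandChain (p : X × ZMod l) :
    boundary (strandChain w p) =
      Finsupp.single (strandShift w p).1 (1 : ℚ) - Finsupp.single p.1 1 := by
  rw [strandChain, boundary_single, ← tgtStrand_fst, crossedEdge]
  unfold srcStrand tgtStrand
  cases (w p.2).2
  · rw [cond_false, cond_false, cond_false, neg_one_smul, neg_sub]
  · rw [cond_true, cond_true, cond_true, one_smul]

variable (w) in
/-- A cell attached along `w`: a finite orbit of strands. -/
def IsCell (c : Finset (X × ZMod l)) : Prop :=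
  c.Nonempty ∧ ∀ p ∈ c, ∀ q, q ∈ c ↔ (strandShift w).SameCycle p q

variable (w) in
/-- The chain of edges along the boundary of a cell. -/
noncomputable def cellChain (c : Finset (X × ZMod l)) : X × B →₀ ℚ := ∑ p ∈ c, strandChain w p

namespace IsCell

variable {c c' : Finset (X × ZMod l)}

theorem shift_mem_iff (hc : IsCell w c) {p : X × ZMod l} : strandShift w p ∈ c ↔ p ∈ c := by
  constructor <;> intro hp
  · exact (hc.2 _ hp _).2 (Equiv.Perm.sameCycle_apply_left.2 (Equiv.Perm.SameCycle.refl _ _))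
  · exact (hc.2 _ hp _).2 (Equiv.Perm.sameCycle_apply_right.2 (Equiv.Perm.SameCycle.refl _ _))

theorem pow_shift_mem (hc : IsCell w c) {p : X × ZMod l} (hp : p ∈ c) (n : ℕ) :
    (strandShift w ^ n) p ∈ c :=
  (hc.2 p hp _).2 (Equiv.Perm.sameCycle_pow_right.2 (Equiv.Perm.SameCycle.refl _ _))

theorem eq_of_mem (hc : IsCell w c) (hc' : IsCell w c') {p : X × ZMod l} (hp : p ∈ c)
    (hp' : p ∈ c') : c = c' := by
  ext q
  rw [hc.2 p hp, hc'.2 p hp']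

theorem cellChain_mem_cyclesIn (hc : IsCell w c) {E : Set (X × B)}
    (hE : ∀ p ∈ c, crossedEdge w p ∈ E) : cellChain w c ∈ cyclesIn E := by
  refine ⟨Submodule.sum_mem _ fun p hp => Finsupp.single_mem_supported ℚ _ (hE p hp), ?_⟩
  rw [SetLike.mem_coe, LinearMap.mem_ker, cellChain, map_sum]
  simp only [boundary_strandChain, sum_sub_distrib]
  exact sub_eq_zero.2 (sum_equiv (strandShift w) (fun _ => hc.shift_mem_iff.symm) fun _ _ => rfl)

theorem exists_mem_snd_eq [NeZero l] (hc : IsCell w c) (i : ZMod l) : ∃ p ∈ c, p.2 = i := by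
  obtain ⟨p, hp⟩ := hc.1
  refine ⟨_, hc.pow_shift_mem hp (i - p.2).val, ?_⟩
  rw [strandShift_pow_snd, ZMod.natCast_zmod_val, add_sub_cancel]

end IsCell

theorem cellChain_apply_crossedEdge_ne_zero {c : Finset (X × ZMod l)} {p : X × ZMod l} (hp : p ∈ c)
    (huniq : ∀ q ∈ c, crossedEdge w q = crossedEdge w p → q = p) :
    cellChain w c (crossedEdge w p) ≠ 0 := by
  rw [cellChain, Finsupp.finsetSum_apply, sum_eq_single_of_mem p hp]
  · rw [strandChain, Finsupp.single_eq_same]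
    cases (w p.2).2 <;> norm_num
  · intro q hq hqp
    exact Finsupp.single_eq_of_ne fun h => hqp (huniq q hq h.symm)

theorem IsReducedWord.eq_of_edgeSrc_eq (hw : IsReducedWord w) {i j : ZMod l}
    (hlabel : (w i).1 = (w j).1) (h : edgeSrc w i = edgeSrc w j) : i = j := by
  unfold edgeSrc at h
  cases hi : (w i).2 <;> cases hj : (w j).2 <;> simp only [hi, hj, cond_true, cond_false] at h
  · exact add_right_cancel h
  · exact (hw i (by rw [h, letterInv, hi, hlabel, ← hj.trans Bool.not_false.symm])).elim
  · exact (hw j (by rw [← h, letterInv, hj, ← hlabel, ← hi.trans Bool.not_false.symm])).elim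
  · exact h

/-- A strand of `S` of maximal height among those through the same vertex. -/
def IsTopAtVertex (t : ZMod l → ℚ) (S : Finset (X × ZMod l)) (p : X × ZMod l) : Prop :=
  p ∈ S ∧ ∀ q ∈ S, q.1 = p.1 → t q.2 ≤ t p.2

variable (w) in
/-- A strand of `S` of maximal height among those crossing the same edge. -/
def IsTopOnEdge (t : ZMod l → ℚ) (S : Finset (X × ZMod l)) (p : X × ZMod l) : Prop :=
  p ∈ S ∧ ∀ q ∈ S, crossedEdge w q = crossedEdge w p → t (edgeSrc w q.2) ≤ t (edgeSrc w p.2)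

section Top

variable {t : ZMod l → ℚ} {S : Finset (X × ZMod l)} {p q : X × ZMod l}

theorem srcStrand_mem (hS : ∀ p, strandShift w p ∈ S ↔ p ∈ S) (hp : p ∈ S) :
    srcStrand w p ∈ S := by
  unfold srcStrand
  cases (w p.2).2
  · exact (hS p).2 hp
  · exact hp

theorem tgtStrand_mem (hS : ∀ p, strandShift w p ∈ S ↔ p ∈ S) (hp : p ∈ S) :
    tgtStrand w p ∈ S := by
  unfold tgtStrand
  cases (w p.2).2
  · exact hp
  · exact (hS p).2 hp

theorem IsCompatibleHeight.edgeSrc_le_iff (ht : IsCompatibleHeight w t) {i j : ZMod l}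
    (hij : (w i).1 = (w j).1) :
    t (edgeSrc w i) ≤ t (edgeSrc w j) ↔ t (edgeTgt w i) ≤ t (edgeTgt w j) := by
  rw [← not_lt, ← not_lt, ht j i hij.symm]

theorem IsTopOnEdge.of_srcStrand (hS : ∀ p, strandShift w p ∈ S ↔ p ∈ S)
    (hp : p ∈ S) (h : IsTopAtVertex t S (srcStrand w p)) : IsTopOnEdge w t S p := by
  refine ⟨hp, fun q hq hqp => ?_⟩
  rw [← srcStrand_snd, ← srcStrand_snd]
  exact h.2 _ (srcStrand_mem hS hq) (congrArg (fun e => e.1) hqp)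

theorem IsTopOnEdge.of_tgtStrand (ht : IsCompatibleHeight w t)
    (hS : ∀ p, strandShift w p ∈ S ↔ p ∈ S) (hp : p ∈ S)
    (h : IsTopAtVertex t S (tgtStrand w p)) : IsTopOnEdge w t S p := by
  refine ⟨hp, fun q hq hqp => ?_⟩
  rw [ht.edgeSrc_le_iff (congrArg Prod.snd hqp), ← tgtStrand_snd, ← tgtStrand_snd]
  refine h.2 _ (tgtStrand_mem hS hq) ?_
  rw [tgtStrand_fst, tgtStrand_fst, hqp]

theorem IsTopAtVertex.isTopOnEdge (ht : IsCompatibleHeight w t)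
    (hS : ∀ p, strandShift w p ∈ S ↔ p ∈ S) (h : IsTopAtVertex t S p) : IsTopOnEdge w t S p := by
  cases hp : (w p.2).2
  · exact .of_tgtStrand ht hS h.1 (by rwa [tgtStrand, hp])
  · exact .of_srcStrand hS h.1 (by rwa [srcStrand, hp])

theorem IsTopAtVertex.isTopOnEdge_of_shift (ht : IsCompatibleHeight w t)
    (hS : ∀ p, strandShift w p ∈ S ↔ p ∈ S) (h : IsTopAtVertex t S (strandShift w p)) :
    IsTopOnEdge w t S p := by
  have hpS : p ∈ S := (hS p).1 h.1
  cases hp : (w p.2).2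
  · exact .of_srcStrand hS hpS (by rwa [srcStrand, hp])
  · exact .of_tgtStrand ht hS hpS (by rwa [tgtStrand, hp])

theorem eq_of_crossedEdge_eq_of_height_eq (hw : IsReducedWord w) (hinj : Function.Injective t)
    (hpq : crossedEdge w p = crossedEdge w q)
    (h : t (edgeSrc w p.2) = t (edgeSrc w q.2)) : p = q :=
  eq_of_crossedEdge_eq hpq (hw.eq_of_edgeSrc_eq (congrArg Prod.snd hpq) (hinj h))

theorem IsTopOnEdge.injOn_crossedEdge (hw : IsReducedWord w) (hinj : Function.Injective t) :
    Set.InjOn (crossedEdge w) {p | IsTopOnEdge w t S p} := fun p hp q hq hpq =>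
  eq_of_crossedEdge_eq_of_height_eq hw hinj hpq
    (le_antisymm (hq.2 p hp.1 hpq) (hp.2 q hq.1 hpq.symm))

theorem not_isTopOnEdge_of_forall_le (hw : IsReducedWord w) (hinj : Function.Injective t)
    (ht : IsCompatibleHeight w t) (hmin : ∀ i, t p.2 ≤ t i) (hq : q ∈ S) (hqp : q ≠ p)
    (he : crossedEdge w q = crossedEdge w p) : ¬ IsTopOnEdge w t S p := by
  intro htop
  have hle : t (edgeSrc w p.2) ≤ t (edgeSrc w q.2) := by
    cases hp : (w p.2).2
    · rw [ht.edgeSrc_le_iff (congrArg Prod.snd he).symm]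
      simpa only [edgeTgt, hp, cond_false] using hmin _
    · simpa only [edgeSrc, hp, cond_true] using hmin _
  exact hqp (eq_of_crossedEdge_eq_of_height_eq hw hinj he (le_antisymm (htop.2 q hq he) hle))

-- Following the cell from its highest strand to its lowest one, the property must be lost.
theorem IsCell.exists_isTopOnEdge_not_isTopAtVertex_shift [NeZero l] (hw : IsReducedWord w)
    (hinj : Function.Injective t) (ht : IsCompatibleHeight w t)
    (hS : ∀ p, strandShift w p ∈ S ↔ p ∈ S)
    (hdouble : ∀ p ∈ S, ∃ q ∈ S, q ≠ p ∧ crossedEdge w q = crossedEdge w p)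
    {c : Finset (X × ZMod l)} (hc : IsCell w c) (hcS : c ⊆ S) :
    ∃ p ∈ c, IsTopOnEdge w t S p ∧ ¬ IsTopAtVertex t S (strandShift w p) := by
  by_contra! hcon
  obtain ⟨imax, hmax⟩ := Finite.exists_max t
  obtain ⟨imin, hmin⟩ := Finite.exists_min t
  obtain ⟨p, hp, rfl⟩ := hc.exists_mem_snd_eq imax
  have htop : ∀ k, IsTopOnEdge w t S ((strandShift w ^ k) p) := by
    intro k
    induction k with
    | zero => exact IsTopAtVertex.isTopOnEdge ht hS ⟨hcS hp, fun q _ _ => hmax q.2⟩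
    | succ k ih =>
      rw [pow_succ', Equiv.Perm.mul_apply]
      exact (hcon _ (hc.pow_shift_mem hp k) ih).isTopOnEdge ht hS
  have hlast := htop (imin - p.2).val
  obtain ⟨q, hq, hqp, he⟩ := hdouble _ hlast.1
  refine not_isTopOnEdge_of_forall_le hw hinj ht ?_ hq hqp he hlast
  rwa [strandShift_pow_snd, ZMod.natCast_zmod_val, add_sub_cancel]

theorem exists_isTopAtVertex (hp : p ∈ S) : ∃ q, IsTopAtVertex t S q ∧ q.1 = p.1 := by
  classical
  obtain ⟨q, hq, hmax⟩ := exists_max_image (S.filter fun q => q.1 = p.1) (fun q => t q.2)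
    ⟨p, mem_filter.2 ⟨hp, rfl⟩⟩
  rw [mem_filter] at hq
  exact ⟨q, ⟨hq.1, fun r hr h => hmax r (mem_filter.2 ⟨hr, h.trans hq.2⟩)⟩, hq.2⟩

end Top

open scoped Classical in
variable (w) in
/-- The vertices on the boundaries of a set of cells. -/
noncomputable def cellVertices (C : Finset (Finset (X × ZMod l))) : Finset X :=
  (C.biUnion id).image Prod.fst

open scoped Classical in
variable (w) in
/-- The edges on the boundaries of a set of cells. -/
noncomputable def cellEdges (C : Finset (Finset (X × ZMod l))) : Finset (X × B) :=
  (C.biUnion id).image (crossedEdge w)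

section Rank

variable {C : Finset (Finset (X × ZMod l))}

theorem IsCell.shift_mem_biUnion_iff [DecidableEq (X × ZMod l)] (hC : ∀ c ∈ C, IsCell w c)
    (p : X × ZMod l) : strandShift w p ∈ C.biUnion id ↔ p ∈ C.biUnion id := by
  simp only [mem_biUnion, id]
  exact exists_congr fun c => and_congr_right fun hc => (hC c hc).shift_mem_iff

open scoped Classical in
-- On each edge there is one top strand. Each vertex `v` provides one whose successor is the top
-- strand at `v`, and each cell one whose successor is not the top strand at a vertex.
theorem card_cellVertices_add_card_le_card_cellEdges [NeZero l] (hw : IsReducedWord w)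
    {t : ZMod l → ℚ} (hinj : Function.Injective t) (ht : IsCompatibleHeight w t)
    (hC : ∀ c ∈ C, IsCell w c)
    (hdouble : ∀ p ∈ C.biUnion id, ∃ q ∈ C.biUnion id, q ≠ p ∧ crossedEdge w q = crossedEdge w p) :
    (cellVertices C).card + C.card ≤ (cellEdges w C).card := by
  set S := C.biUnion id
  have hS : ∀ p, strandShift w p ∈ S ↔ p ∈ S := IsCell.shift_mem_biUnion_iff hC
  let T := S.filter (IsTopOnEdge w t S)
  let A := T.filter fun p => IsTopAtVertex t S (strandShift w p)
  let A' := T.filter fun p => ¬ IsTopAtVertex t S (strandShift w p)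
  have hvertices : (cellVertices C).card ≤ A.card := by
    refine card_le_card_of_surjOn (fun p => (strandShift w p).1) fun v hv => ?_
    obtain ⟨p, hp, rfl⟩ := mem_image.1 hv
    obtain ⟨q, hq, hqp⟩ := exists_isTopAtVertex (t := t) hp
    obtain ⟨q, rfl⟩ := (strandShift w).surjective q
    have htop := hq.isTopOnEdge_of_shift ht hS
    exact ⟨q, mem_filter.2 ⟨mem_filter.2 ⟨htop.1, htop⟩, hq⟩, hqp⟩
  have hcells : C.card ≤ A'.card := by
    have hex := fun c : C => (hC c c.2).exists_isTopOnEdge_not_isTopAtVertex_shift hw hinj ht hS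
      hdouble (subset_biUnion_of_mem id c.2)
    choose p hpc htop hnot using hex
    rw [← card_attach]
    refine card_le_card_of_injOn p (fun c _ => ?_) fun c _ c' _ hcc' => Subtype.ext ?_
    · exact mem_filter.2 ⟨mem_filter.2 ⟨(htop c).1, htop c⟩, hnot c⟩
    · exact (hC c c.2).eq_of_mem (hC c' c'.2) (hpc c) (hcc' ▸ hpc c')
  calc (cellVertices C).card + C.card ≤ A.card + A'.card := add_le_add hvertices hcells
    _ = T.card := card_filter_add_card_filter_not _
    _ ≤ (cellEdges w C).card :=
      card_le_card_of_injOn (crossedEdge w)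
        (fun p hp => mem_image_of_mem _ (mem_filter.1 hp).1)
        fun p hp q hq => IsTopOnEdge.injOn_crossedEdge hw hinj (mem_filter.1 hp).2
          (mem_filter.1 hq).2

theorem endpoints_mem_cellVertices (hC : ∀ c ∈ C, IsCell w c) {e : X × B}
    (he : e ∈ cellEdges w C) :
    e.1 ∈ cellVertices C ∧ FreeGroup.of e.2 • e.1 ∈ cellVertices C := by
  classical
  obtain ⟨p, hp, rfl⟩ := mem_image.1 he
  have hS := IsCell.shift_mem_biUnion_iff hC
  rw [← tgtStrand_fst]
  exact ⟨mem_image_of_mem _ (srcStrand_mem hS hp), mem_image_of_mem _ (tgtStrand_mem hS hp)⟩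

theorem cellChain_mem_cyclesIn_cellEdges (hC : ∀ c ∈ C, IsCell w c)
    {c : Finset (X × ZMod l)} (hc : c ∈ C) :
    cellChain w c ∈ cyclesIn (cellEdges w C : Set (X × B)) := by
  classical
  exact (hC c hc).cellChain_mem_cyclesIn fun p hp =>
    mem_coe.2 (mem_image_of_mem _ (mem_biUnion.2 ⟨c, hc, hp⟩))

theorem cellEdges_mono {C' : Finset (Finset (X × ZMod l))} (h : C ⊆ C') :
    cellEdges w C ⊆ cellEdges w C' := by
  classical
  exact image_subset_image (biUnion_subset_biUnion_of_subset_left _ h)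

open scoped Classical in
theorem cellChain_notMem_cyclesIn_cellEdges_erase (hC : ∀ c ∈ C, IsCell w c)
    {c : Finset (X × ZMod l)} (hc : c ∈ C) {p : X × ZMod l} (hp : p ∈ c)
    (huniq : ∀ q ∈ C.biUnion id, q ≠ p → crossedEdge w q ≠ crossedEdge w p) :
    cellChain w c ∉ cyclesIn (cellEdges w (C.erase c) : Set (X × B)) := by
  intro hmem
  have hne : cellChain w c (crossedEdge w p) ≠ 0 :=
    cellChain_apply_crossedEdge_ne_zero hp fun q hq hqp =>
      not_not.1 fun h => huniq q (mem_biUnion.2 ⟨c, hc, hq⟩) h hqp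
  obtain ⟨q, hq, hqp⟩ := mem_image.1
    ((Finsupp.mem_supported ℚ _).1 hmem.1 (Finsupp.mem_support_iff.2 hne))
  obtain ⟨c', hc', hqc'⟩ := mem_biUnion.1 hq
  rw [mem_erase] at hc'
  refine huniq q (mem_biUnion.2 ⟨c', hc'.2, hqc'⟩) ?_ hqp
  rintro rfl
  exact hc'.1 ((hC c' hc'.2).eq_of_mem (hC c hc) hqc' hp)

-- If some edge is crossed only once, the cell crossing it is independent of the others and can be
-- removed; otherwise the stacking bounds the Euler characteristic.
theorem card_lt_finrank_cyclesIn_of_not_linearIndepOn [NeZero l] (hw : IsReducedWord w)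
    {t : ZMod l → ℚ} (hinj : Function.Injective t) (ht : IsCompatibleHeight w t)
    (hC : ∀ c ∈ C, IsCell w c)
    (hdep : ¬ LinearIndepOn ℚ (cellChain w) (C : Set (Finset (X × ZMod l)))) :
    C.card < Module.finrank ℚ (cyclesIn (cellEdges w C : Set (X × B))) := by
  classical
  induction hn : C.card generalizing C with
  | zero =>
    rw [card_eq_zero.1 hn, coe_empty] at hdep
    exact (hdep (linearIndepOn_empty _ _)).elim
  | succ n ih =>
    by_cases hdouble : ∀ p ∈ C.biUnion id, ∃ q ∈ C.biUnion id,
        q ≠ p ∧ crossedEdge w q = crossedEdge w p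
    · obtain ⟨c, hc⟩ : C.Nonempty := card_pos.1 (by omega)
      obtain ⟨p, hp⟩ := (hC c hc).1
      have hV : (cellVertices C).Nonempty :=
        ⟨p.1, mem_image_of_mem _ (mem_biUnion.2 ⟨c, hc, hp⟩)⟩
      have hcount := card_cellVertices_add_card_le_card_cellEdges hw hinj ht hC hdouble
      have hrank := card_edges_lt_card_vertices_add_finrank_cyclesIn hV fun e he =>
        endpoints_mem_cellVertices hC he
      omega
    · push Not at hdouble
      obtain ⟨p, hp, huniq⟩ := hdouble
      obtain ⟨c, hc, hpc⟩ := mem_biUnion.1 hp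
      have hC' : ∀ c' ∈ C.erase c, IsCell w c' := fun c' hc' => hC c' (mem_of_mem_erase hc')
      have hnot := cellChain_notMem_cyclesIn_cellEdges_erase hC hc hpc huniq
      have hdep' : ¬ LinearIndepOn ℚ (cellChain w) (C.erase c : Set (Finset (X × ZMod l))) := by
        intro hind
        rw [← insert_erase hc, coe_insert] at hdep
        refine hdep (hind.insert fun hmem => hnot (Submodule.span_le.2 ?_ hmem))
        rintro _ ⟨c', hc', rfl⟩
        exact cellChain_mem_cyclesIn_cellEdges hC' hc'
      have hlt : cyclesIn (cellEdges w (C.erase c) : Set (X × B)) < cyclesIn (cellEdges w C) :=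
        SetLike.lt_iff_le_and_exists.2 ⟨cyclesIn_mono (cellEdges_mono (erase_subset c C)),
          _, cellChain_mem_cyclesIn_cellEdges hC hc, hnot⟩
      have := finiteDimensional_cyclesIn (cellEdges w C)
      have hrank := Submodule.finrank_lt_finrank_of_lt hlt
      have hih := ih hC' hdep' (by rw [card_erase_of_mem hc, hn, Nat.add_sub_cancel])
      omega

end Rank

end Strands

/-! ### Chains of paths and loops -/

section Paths

variable {B X : Type*} [MulAction (FreeGroup B) X]

/-- The action of a free group on pairs of a vertex and a chain which moves the vertex and adds to
the chain the edges run through. It defines `pathChain`. -/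
noncomputable def chainAction : FreeGroup B →* Equiv.Perm (X × (X × B →₀ ℚ)) :=
  FreeGroup.lift fun b =>
    { toFun := fun p => (FreeGroup.of b • p.1, p.2 + Finsupp.single (p.1, b) 1)
      invFun := fun p =>
        ((FreeGroup.of b)⁻¹ • p.1, p.2 - Finsupp.single ((FreeGroup.of b)⁻¹ • p.1, b) 1)
      left_inv := fun p => by simp
      right_inv := fun p => by simp }

/-- The chain of the path labelled by `g` in the Schreier graph from `x` to `g • x`. As the action
is from the left, the word `g` is read from right to left. -/
noncomputable def pathChain (g : FreeGroup B) (x : X) : X × B →₀ ℚ := (chainAction g (x, 0)).2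

theorem chainAction_apply (g : FreeGroup B) (x : X) (c : X × B →₀ ℚ) :
    chainAction g (x, c) = (g • x, c + pathChain g x) := by
  unfold pathChain
  induction g using FreeGroup.induction_on generalizing x c with
  | C1 => simp
  | of b => simp [chainAction]
  | inv_of b _ => simp [chainAction, Equiv.Perm.inv_def, Equiv.symm, sub_eq_add_neg]
  | mul g h ihg ihh =>
    rw [map_mul, Equiv.Perm.mul_apply, Equiv.Perm.mul_apply, ihh x c, ihh x 0, ihg, ihg _ (0 + _),
      mul_smul, zero_add, add_assoc]

theorem pathChain_mul (g h : FreeGroup B) (x : X) :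
    pathChain (g * h) x = pathChain h x + pathChain g (h • x) := by
  rw [pathChain, map_mul, Equiv.Perm.mul_apply, chainAction_apply, chainAction_apply, zero_add]

theorem pathChain_one (x : X) : pathChain (1 : FreeGroup B) x = 0 := by
  rw [pathChain, map_one, Equiv.Perm.one_apply]

theorem pathChain_of (b : B) (x : X) : pathChain (FreeGroup.of b) x = Finsupp.single (x, b) 1 := by
  simp [pathChain, chainAction]

theorem pathChain_inv_smul (g : FreeGroup B) (x : X) :
    pathChain g⁻¹ (g • x) = -pathChain g x := by
  rw [eq_neg_iff_add_eq_zero, add_comm, ← pathChain_mul, inv_mul_cancel, pathChain_one]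

/-- The chain of a loop at `x`, as a homomorphism. -/
noncomputable def loopChain (x : X) :
    MulAction.stabilizer (FreeGroup B) x →* Multiplicative (X × B →₀ ℚ) where
  toFun g := .ofAdd (pathChain (g : FreeGroup B) x)
  map_one' := congrArg _ (pathChain_one x)
  map_mul' g h := by
    rw [Subgroup.coe_mul, pathChain_mul, MulAction.mem_stabilizer_iff.1 h.2, add_comm, ofAdd_add]

theorem toAdd_loopChain (x : X) (g : MulAction.stabilizer (FreeGroup B) x) :
    (loopChain x g).toAdd = pathChain (g : FreeGroup B) x := rfl

-- Joining the endpoints of each edge to `x` by fixed paths turns a chain into loops at `x`, up to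
-- a correction depending only on the boundary.
theorem mem_span_range_loopChain [MulAction.IsPretransitive (FreeGroup B) X] (x : X)
    {c : X × B →₀ ℚ} (hc : boundary c = 0) :
    c ∈ Submodule.span ℚ (Set.range fun g => (loopChain (B := B) x g).toAdd) := by
  choose γ hγ using MulAction.exists_smul_eq (FreeGroup B) x
  let loop (e : X × B) : FreeGroup B := (γ (FreeGroup.of e.2 • e.1))⁻¹ * FreeGroup.of e.2 * γ e.1
  have hloop (e : X × B) : loop e ∈ MulAction.stabilizer (FreeGroup B) x := by
    rw [MulAction.mem_stabilizer_iff, mul_smul, mul_smul, hγ, inv_smul_eq_iff, hγ]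
  have hchain (e : X × B) : pathChain (loop e) x = Finsupp.single e 1 -
      (pathChain (γ (FreeGroup.of e.2 • e.1)) x - pathChain (γ e.1) x) := by
    have hinv := pathChain_inv_smul (γ (FreeGroup.of e.2 • e.1)) x
    rw [hγ] at hinv
    rw [pathChain_mul, pathChain_mul, hγ, hinv, pathChain_of]
    abel
  have hmap : Finsupp.linearCombination ℚ (fun e => pathChain (loop e) x) =
      LinearMap.id - Finsupp.linearCombination ℚ (fun y => pathChain (γ y) x) ∘ₗ boundary := by
    refine Finsupp.lhom_ext' fun e => LinearMap.ext_ring ?_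
    simp only [LinearMap.comp_apply, LinearMap.sub_apply, LinearMap.id_apply,
      Finsupp.lsingle_apply, boundary_single, one_smul, map_sub,
      Finsupp.linearCombination_single, hchain]
  have hc' := LinearMap.congr_fun hmap c
  rw [LinearMap.sub_apply, LinearMap.comp_apply, hc, map_zero, sub_zero, LinearMap.id_apply] at hc'
  rw [← hc', Finsupp.linearCombination_apply]
  exact Submodule.sum_mem _ fun e _ =>
    Submodule.smul_mem _ _ (Submodule.subset_span ⟨⟨loop e, hloop e⟩, rfl⟩)

end Paths

/-! ### Cells of a relator -/

section Cells

open Finset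

variable {B X : Type*} [MulAction (FreeGroup B) X] {l : ℕ} (w : ZMod l → B × Bool)

/-- The product of the first `k` letters of the periodic word `w`, from right to left. -/
def wordProd : ℕ → FreeGroup B
  | 0 => 1
  | k + 1 => FreeGroup.mk [w k] * wordProd k

theorem wordProd_add_period (k : ℕ) : wordProd w (k + l) = wordProd w k * wordProd w l := by
  induction k with
  | zero => rw [zero_add, wordProd, one_mul]
  | succ k ih =>
    rw [add_right_comm, wordProd, ih, wordProd, mul_assoc, Nat.cast_add, ZMod.natCast_self,
      add_zero]

theorem wordProd_period_mul (m : ℕ) : wordProd w (l * m) = wordProd w l ^ m := by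
  induction m with
  | zero => rw [mul_zero, pow_zero, wordProd]
  | succ m ih => rw [Nat.mul_succ, wordProd_add_period, ih, pow_succ]

theorem strandShift_pow_apply (k : ℕ) (x : X) :
    (strandShift w ^ k) (x, 0) = (wordProd w k • x, (k : ZMod l)) := by
  induction k with
  | zero => simp [wordProd]
  | succ k ih =>
    rw [pow_succ', Equiv.Perm.mul_apply, ih, wordProd, mul_smul, Nat.cast_succ]
    rfl

theorem pathChain_letter (p : X × ZMod l) :
    pathChain (FreeGroup.mk [w p.2]) p.1 = strandChain w p := by
  cases h : (w p.2).2
  · have hinv := pathChain_inv_smul (FreeGroup.of (w p.2).1) ((FreeGroup.of (w p.2).1)⁻¹ • p.1)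
    rw [smul_inv_smul, pathChain_of] at hinv
    simp [strandChain, crossedEdge, srcStrand, strandShift, h, mk_letter_of_snd_eq_false h, hinv]
  · simp [strandChain, crossedEdge, srcStrand, h, mk_letter_of_snd_eq_true h, pathChain_of]

theorem pathChain_wordProd (k : ℕ) (x : X) :
    pathChain (wordProd w k) x = ∑ i ∈ range k, strandChain w ((strandShift w ^ i) (x, 0)) := by
  induction k with
  | zero => rw [range_zero, sum_empty, wordProd, pathChain_one]
  | succ k ih =>
    rw [sum_range_succ, ← ih, wordProd, pathChain_mul, strandShift_pow_apply, ← pathChain_letter]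

theorem sum_range_minimalPeriod_mul {α M : Type*} [AddCommMonoid M] (σ : Equiv.Perm α) (p : α)
    (f : α → M) (m : ℕ) :
    ∑ i ∈ range (Function.minimalPeriod σ p * m), f ((σ ^ i) p) =
      m • ∑ i ∈ range (Function.minimalPeriod σ p), f ((σ ^ i) p) := by
  have hper (k : ℕ) : (σ ^ (Function.minimalPeriod σ p * k)) p = p := by
    rw [← Equiv.Perm.iterate_eq_pow]
    exact (Function.isPeriodicPt_minimalPeriod σ p).mul_const k
  induction m with
  | zero => simp
  | succ m ih =>
    rw [Nat.mul_succ, sum_range_add, ih, succ_nsmul]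
    simp only [add_comm _ (_ : ℕ), pow_add, Equiv.Perm.mul_apply, hper]

open scoped Classical in
/-- The cell through a strand, provided that its orbit is finite. -/
noncomputable def cellThrough (p : X × ZMod l) : Finset (X × ZMod l) :=
  (range (Function.minimalPeriod (strandShift w) p)).image fun i => (strandShift w ^ i) p

variable {w}

theorem sum_cellThrough {M : Type*} [AddCommMonoid M] (p : X × ZMod l) (f : X × ZMod l → M) :
    ∑ q ∈ cellThrough w p, f q =
      ∑ i ∈ range (Function.minimalPeriod (strandShift w) p), f ((strandShift w ^ i) p) := by
  classical
  refine sum_image fun i hi j hj hij => ?_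
  rw [← Equiv.Perm.iterate_eq_pow, ← Equiv.Perm.iterate_eq_pow] at hij
  exact Function.iterate_injOn_Iio_minimalPeriod (mem_range.1 hi) (mem_range.1 hj) hij

theorem mem_cellThrough_iff_sameCycle {p q : X × ZMod l}
    (hp : p ∈ Function.periodicPts (strandShift w)) :
    q ∈ cellThrough w p ↔ (strandShift w).SameCycle p q := by
  classical
  constructor
  · rintro h
    obtain ⟨i, -, rfl⟩ := mem_image.1 h
    exact Equiv.Perm.sameCycle_pow_right.2 (Equiv.Perm.SameCycle.refl _ _)
  · rintro ⟨i, rfl⟩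
    set d := Function.minimalPeriod (strandShift w) p
    have hd : 0 < (d : ℤ) := Nat.cast_pos.2 (Function.minimalPeriod_pos_of_mem_periodicPts hp)
    have hper : (strandShift w ^ d) p = p := by
      rw [← Equiv.Perm.iterate_eq_pow]
      exact Function.isPeriodicPt_minimalPeriod _ p
    have hmod := Int.emod_nonneg i hd.ne'
    refine mem_image.2 ⟨(i % d).toNat, mem_range.2 ?_, ?_⟩
    · have := Int.emod_lt_of_pos i hd
      omega
    · rw [← zpow_natCast, Int.toNat_of_nonneg hmod]
      conv_rhs => rw [← Int.emod_add_mul_ediv i d, zpow_add, Equiv.Perm.mul_apply, zpow_mul,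
        zpow_natCast, Equiv.Perm.zpow_apply_eq_self_of_apply_eq_self hper]

theorem isCell_cellThrough {p : X × ZMod l} (hp : p ∈ Function.periodicPts (strandShift w)) :
    IsCell w (cellThrough w p) := by
  refine ⟨⟨p, (mem_cellThrough_iff_sameCycle hp).2 (.refl _ _)⟩, fun q hq r => ?_⟩
  rw [mem_cellThrough_iff_sameCycle hp] at hq ⊢
  exact ⟨hq.symm.trans, hq.trans⟩

theorem isPeriodicPt_strandShift {N : ℕ} {x : X} (hx : (wordProd w l ^ N) • x = x) :
    Function.IsPeriodicPt (strandShift w) (l * N) (x, 0) := by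
  rw [Function.IsPeriodicPt, Function.IsFixedPt, Equiv.Perm.iterate_eq_pow, strandShift_pow_apply,
    wordProd_period_mul, hx, Nat.cast_mul, ZMod.natCast_self, zero_mul]

theorem mem_periodicPts_strandShift [NeZero l] {N : ℕ} (hN : N ≠ 0) {x : X}
    (hx : (wordProd w l ^ N) • x = x) : (x, 0) ∈ Function.periodicPts (strandShift w) :=
  Function.mk_mem_periodicPts (Nat.pos_of_ne_zero (mul_ne_zero (NeZero.ne l) hN))
    (isPeriodicPt_strandShift hx)

theorem exists_pathChain_eq_nsmul_cellChain [NeZero l] {N : ℕ} (hN : N ≠ 0) {x : X}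
    (hx : (wordProd w l ^ N) • x = x) :
    ∃ m : ℕ, m ≠ 0 ∧
      pathChain (wordProd w l ^ N) x = m • cellChain w (cellThrough w (x, 0)) := by
  obtain ⟨m, hm⟩ := (isPeriodicPt_strandShift hx).minimalPeriod_dvd
  refine ⟨m, ?_, ?_⟩
  · rintro rfl
    exact mul_ne_zero (NeZero.ne l) hN hm
  · rw [← wordProd_period_mul, pathChain_wordProd, hm, sum_range_minimalPeriod_mul, cellChain,
      sum_cellThrough]

theorem exists_pow_smul_eq_of_mem_cellThrough {x y : X}
    (h : (y, 0) ∈ cellThrough w (x, 0)) : ∃ j : ℕ, (wordProd w l ^ j) • x = y := by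
  classical
  obtain ⟨i, -, hi⟩ := mem_image.1 h
  rw [strandShift_pow_apply, Prod.mk.injEq, ZMod.natCast_eq_zero_iff] at hi
  obtain ⟨j, rfl⟩ := hi.2
  exact ⟨j, by rw [← wordProd_period_mul, hi.1]⟩

theorem pathChain_conj {g h : FreeGroup B} {x : X} (hx : (g * h * g⁻¹) • x = x) :
    pathChain (g * h * g⁻¹) x = pathChain h (g⁻¹ • x) := by
  have hinv := pathChain_inv_smul g (g⁻¹ • x)
  have hfix : h • g⁻¹ • x = g⁻¹ • x := by
    rwa [eq_inv_smul_iff, ← mul_smul, ← mul_smul]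
  rw [smul_inv_smul] at hinv
  rw [pathChain_mul, pathChain_mul, hfix, hinv]
  abel

theorem smul_inv_smul_eq_of_conj_mem_stabilizer {G : Type*} [Group G] [MulAction G X] {g h : G}
    {x : X} (hg : g * h * g⁻¹ ∈ MulAction.stabilizer G x) : h • g⁻¹ • x = g⁻¹ • x := by
  rwa [MulAction.mem_stabilizer_iff, mul_smul, mul_smul, ← eq_inv_smul_iff] at hg

theorem toAdd_mem_span_of_closure_sup_normalClosure_eq_top {K M I J : Type*} [Group K]
    [AddCommGroup M] [Module ℚ M] (q : K →* Multiplicative M) {ρ : I → K} {x : J → K}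
    (hgen : Subgroup.closure (Set.range x) ⊔ Subgroup.normalClosure (Set.range ρ) = ⊤) (k : K) :
    (q k).toAdd ∈ Submodule.span ℚ (Set.range fun i => (q (ρ i)).toAdd) ⊔
      Submodule.span ℚ (Set.range fun j => (q (x j)).toAdd) := by
  set T := Submodule.span ℚ (Set.range fun i => (q (ρ i)).toAdd) ⊔
    Submodule.span ℚ (Set.range fun j => (q (x j)).toAdd)
  suffices Subgroup.closure (Set.range x) ⊔ Subgroup.normalClosure (Set.range ρ) ≤
      T.toAddSubgroup.toSubgroup.comap q from this (hgen ▸ Subgroup.mem_top k)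
  refine sup_le ((Subgroup.closure_le _).2 ?_) (Subgroup.normalClosure_le_normal ?_)
  · rintro _ ⟨j, rfl⟩
    exact Submodule.mem_sup_right (Submodule.subset_span ⟨j, rfl⟩)
  · rintro _ ⟨i, rfl⟩
    exact Submodule.mem_sup_left (Submodule.subset_span ⟨i, rfl⟩)

theorem ker_boundary_le_span_loopChain [MulAction.IsPretransitive (FreeGroup B) X] {x₀ : X}
    {I J : Type*} {ρ : I → MulAction.stabilizer (FreeGroup B) x₀}
    {x : J → MulAction.stabilizer (FreeGroup B) x₀}
    (hgen : Subgroup.closure (Set.range x) ⊔ Subgroup.normalClosure (Set.range ρ) = ⊤) :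
    LinearMap.ker boundary ≤ Submodule.span ℚ (Set.range fun i => (loopChain x₀ (ρ i)).toAdd) ⊔
      Submodule.span ℚ (Set.range fun j => (loopChain x₀ (x j)).toAdd) := by
  intro c hc
  refine Submodule.span_le.2 ?_ (mem_span_range_loopChain x₀ (LinearMap.mem_ker.1 hc))
  rintro _ ⟨k, rfl⟩
  exact toAdd_mem_span_of_closure_sup_normalClosure_eq_top _ hgen k

theorem exists_loopChain_conj_eq_nsmul_cellChain [NeZero l] {N : ℕ} (hN : N ≠ 0) {x₀ : X}
    {g : FreeGroup B} {ρ : MulAction.stabilizer (FreeGroup B) x₀}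
    (hρ : (ρ : FreeGroup B) = g * wordProd w l ^ N * g⁻¹) :
    ∃ m : ℕ, m ≠ 0 ∧
      (loopChain x₀ ρ).toAdd = m • cellChain w (cellThrough w (g⁻¹ • x₀, 0)) := by
  have hloop : g * wordProd w l ^ N * g⁻¹ ∈ MulAction.stabilizer (FreeGroup B) x₀ := hρ ▸ ρ.2
  rw [toAdd_loopChain, hρ, pathChain_conj (MulAction.mem_stabilizer_iff.1 hloop)]
  exact exists_pathChain_eq_nsmul_cellChain hN (smul_inv_smul_eq_of_conj_mem_stabilizer hloop)

section Relators

variable [NeZero l] {N : ℕ} {x₀ : X} {I J : Type*} {g : I → FreeGroup B}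
  {ρ : I → MulAction.stabilizer (FreeGroup B) x₀}
  {x : J → MulAction.stabilizer (FreeGroup B) x₀}

theorem linearIndependent_loopChain (hN : N ≠ 0)
    (hρ : ∀ i, (ρ i : FreeGroup B) = g i * wordProd w l ^ N * (g i)⁻¹)
    (hind : LinearIndependent ℚ fun i => cellChain w (cellThrough w ((g i)⁻¹ • x₀, 0))) :
    LinearIndependent ℚ fun i => (loopChain x₀ (ρ i)).toAdd := by
  choose m hm hchain using fun i => exists_loopChain_conj_eq_nsmul_cellChain hN (hρ i)
  convert hind.units_smul fun i => Units.mk0 (m i : ℚ) (Nat.cast_ne_zero.2 (hm i)) using 2 with i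
  rw [hchain]
  exact (Nat.cast_smul_eq_nsmul ℚ _ _).symm

-- Independent relators have nothing to bound; dependent ones are bounded by the cycles, which all
-- come from the relators and the generators `x`.
theorem card_lt_finrank_span_loopChain_add_card (hred : IsReducedWord w)
    (hprim : IsPrimitiveWord w) (hN : N ≠ 0) [MulAction.IsPretransitive (FreeGroup B) X]
    [Fintype I] [Fintype J] [Nonempty J]
    (hρ : ∀ i, (ρ i : FreeGroup B) = g i * wordProd w l ^ N * (g i)⁻¹)
    (hcell : Function.Injective fun i => cellThrough w ((g i)⁻¹ • x₀, 0))
    (hgen : Subgroup.closure (Set.range x) ⊔ Subgroup.normalClosure (Set.range ρ) = ⊤) :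
    Fintype.card I <
      Module.finrank ℚ (Submodule.span ℚ (Set.range fun i => (loopChain x₀ (ρ i)).toAdd)) +
        Fintype.card J := by
  classical
  by_cases hind : LinearIndependent ℚ fun i => cellChain w (cellThrough w ((g i)⁻¹ • x₀, 0))
  · rw [finrank_span_eq_card (linearIndependent_loopChain hN hρ hind)]
    exact Nat.lt_add_of_pos_right Fintype.card_pos
  · obtain ⟨t, hinj, ht⟩ := exists_stacking hred hprim
    let C := univ.image fun i => cellThrough w ((g i)⁻¹ • x₀, 0)
    have hC : ∀ c ∈ C, IsCell w c := by
      intro c hc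
      obtain ⟨i, -, rfl⟩ := mem_image.1 hc
      exact isCell_cellThrough (mem_periodicPts_strandShift hN
        (smul_inv_smul_eq_of_conj_mem_stabilizer (hρ i ▸ (ρ i).2)))
    have hdep : ¬ LinearIndepOn ℚ (cellChain w) (C : Set (Finset (X × ZMod l))) := by
      rwa [coe_image, coe_univ, Set.image_univ, linearIndepOn_range_iff hcell]
    have := FiniteDimensional.span_of_finite ℚ
      (Set.finite_range fun i => (loopChain x₀ (ρ i)).toAdd)
    have := FiniteDimensional.span_of_finite ℚ
      (Set.finite_range fun j => (loopChain x₀ (x j)).toAdd)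
    calc Fintype.card I = C.card := (card_image_of_injective _ hcell).symm
      _ < Module.finrank ℚ (cyclesIn (cellEdges w C : Set (X × B))) :=
        card_lt_finrank_cyclesIn_of_not_linearIndepOn hred hinj ht hC hdep
      _ ≤ _ := Submodule.finrank_mono (inf_le_right.trans (ker_boundary_le_span_loopChain hgen))
      _ ≤ _ := Submodule.finrank_add_le_finrank_add_finrank _ _
      _ ≤ _ := Nat.add_le_add_left (finrank_range_le_card _) _

end Relators

end Cells

/-! ### Heisenberg groups -/

/-- The Heisenberg group of a ring: the upper unitriangular matrices with first row `1, x, z` and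
last column `z, y, 1`. -/
@[ext]
structure HeisenbergGroup (R : Type*) where
  /-- The entry in the first row and second column. -/
  x : R
  /-- The entry in the second row and third column. -/
  y : R
  /-- The entry in the upper right corner. -/
  z : R

namespace HeisenbergGroup

variable {R : Type*} [Ring R]

instance : Mul (HeisenbergGroup R) := ⟨fun g h => ⟨g.x + h.x, g.y + h.y, g.z + h.z + g.x * h.y⟩⟩

instance : One (HeisenbergGroup R) := ⟨⟨0, 0, 0⟩⟩

instance : Inv (HeisenbergGroup R) := ⟨fun g => ⟨-g.x, -g.y, -g.z + g.x * g.y⟩⟩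

theorem mul_def (g h : HeisenbergGroup R) :
    g * h = ⟨g.x + h.x, g.y + h.y, g.z + h.z + g.x * h.y⟩ := rfl

theorem one_def : (1 : HeisenbergGroup R) = ⟨0, 0, 0⟩ := rfl

theorem inv_def (g : HeisenbergGroup R) : g⁻¹ = ⟨-g.x, -g.y, -g.z + g.x * g.y⟩ := rfl

instance : Group (HeisenbergGroup R) :=
  .ofLeftAxioms
    (fun _ _ _ => by ext <;> simp only [mul_def, add_mul, mul_add] <;> abel)
    (fun _ => by ext <;> simp [mul_def, one_def])
    (fun _ => by ext <;> simp [mul_def, one_def, inv_def])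

/-- The homomorphism to the first entry above the diagonal. -/
def xHom : HeisenbergGroup R →* Multiplicative R where
  toFun g := .ofAdd g.x
  map_one' := rfl
  map_mul' _ _ := rfl

/-- The homomorphism to the second entry above the diagonal. -/
def yHom : HeisenbergGroup R →* Multiplicative R where
  toFun g := .ofAdd g.y
  map_one' := rfl
  map_mul' _ _ := rfl

end HeisenbergGroup

section CupProduct

open scoped commutatorElement

variable {K R : Type*} [Group K] [Ring R]

/-- The coboundary of the cochain `h` is, up to sign, the cup product of the characters `α`
and `β`. -/
def IsCupPrimitive (α β : K →* Multiplicative R) (h : K → R) : Prop :=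
  ∀ g k, h (g * k) = h g + h k + (α g).toAdd * (β k).toAdd

theorem exists_isCupPrimitive [IsFreeGroup K] (α β : K →* Multiplicative R) :
    ∃ h, IsCupPrimitive α β h := by
  let Φ : K →* HeisenbergGroup R := IsFreeGroup.lift fun s =>
    ⟨(α (IsFreeGroup.of s)).toAdd, (β (IsFreeGroup.of s)).toAdd, 0⟩
  have hα : HeisenbergGroup.xHom.comp Φ = α := IsFreeGroup.ext_hom fun s => by
    simp [Φ, HeisenbergGroup.xHom]
  have hβ : HeisenbergGroup.yHom.comp Φ = β := IsFreeGroup.ext_hom fun s => by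
    simp [Φ, HeisenbergGroup.yHom]
  refine ⟨fun g => (Φ g).z, fun g k => ?_⟩
  simp only [map_mul, ← hα, ← hβ]
  rfl

namespace IsCupPrimitive

variable {α β : K →* Multiplicative R} {h : K → R}

theorem map_one (hh : IsCupPrimitive α β h) : h 1 = 0 := by
  simpa using hh 1 1

theorem map_mul_of_eq_one (hh : IsCupPrimitive α β h) {g k : K} (hg : α g = 1) :
    h (g * k) = h g + h k := by
  rw [hh, hg, toAdd_one, zero_mul, add_zero]

theorem map_inv_of_eq_one (hh : IsCupPrimitive α β h) {g : K} (hg : α g = 1) :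
    h g⁻¹ = -h g := by
  rw [eq_neg_iff_add_eq_zero, add_comm, ← hh.map_mul_of_eq_one hg, mul_inv_cancel, hh.map_one]

theorem map_conj_of_eq_one (hh : IsCupPrimitive α β h) {g k : K} (hα : α k = 1) (hβ : β k = 1) :
    h (g * k * g⁻¹) = h k := by
  have hmul := hh.map_mul_of_eq_one (g := g * k * g⁻¹) (k := g) (by simp [hα])
  rw [inv_mul_cancel_right, hh, hβ, toAdd_one, mul_zero, add_zero, add_comm] at hmul
  exact (add_right_cancel hmul).symm

theorem map_commutatorElement (hh : IsCupPrimitive α β h) (g k : K) :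
    h ⁅g, k⁆ = (α g).toAdd * (β k).toAdd - (α k).toAdd * (β g).toAdd := by
  have hα : α ⁅g, k⁆ = 1 := by
    rw [_root_.map_commutatorElement, commutatorElement_eq_one_iff_mul_comm, mul_comm]
  have hmul := hh.map_mul_of_eq_one (k := k * g) hα
  rw [show ⁅g, k⁆ * (k * g) = g * k by group, hh, hh k g,
    add_comm (h k), add_left_comm, add_right_inj] at hmul
  exact eq_sub_of_add_eq hmul.symm

end IsCupPrimitive

section Rank

variable {M E I : Type*} [AddCommGroup M] [Module ℚ M] {α β : E → K →* Multiplicative ℚ}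
  {h : E → K → ℚ} {ρ : I → K}

theorem mem_span_of_mem_normalClosure (hh : ∀ e, IsCupPrimitive (α e) (β e) (h e))
    (hα : ∀ e i, α e (ρ i) = 1) (hβ : ∀ e i, β e (ρ i) = 1) (q : K →* Multiplicative M) {k : K}
    (hk : k ∈ Subgroup.normalClosure (Set.range ρ)) :
    ((q k).toAdd, fun e => h e k) ∈
      Submodule.span ℚ (Set.range fun i => ((q (ρ i)).toAdd, fun e => h e (ρ i))) := by
  set T := Submodule.span ℚ (Set.range fun i => ((q (ρ i)).toAdd, fun e => h e (ρ i)))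
  suffices (∀ e, α e k = 1) ∧ ((q k).toAdd, fun e => h e k) ∈ T from this.2
  induction hk using Subgroup.closure_induction with
  | mem k hk =>
    obtain ⟨-, ⟨i, rfl⟩, hconj⟩ := Group.mem_conjugatesOfSet_iff.1 hk
    obtain ⟨g, rfl⟩ := isConj_iff.1 hconj
    refine ⟨fun e => by simp [hα], ?_⟩
    simp only [(hh _).map_conj_of_eq_one (hα _ i) (hβ _ i), map_mul, map_inv,
      mul_inv_cancel_comm]
    exact Submodule.subset_span ⟨i, rfl⟩
  | one =>
    simp only [map_one, (hh _).map_one, implies_true, true_and]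
    exact T.zero_mem
  | mul g k _ _ hg hk =>
    refine ⟨fun e => by rw [map_mul, hg.1, hk.1, mul_one], ?_⟩
    simp only [map_mul, (hh _).map_mul_of_eq_one (hg.1 _)]
    exact T.add_mem hg.2 hk.2
  | inv g _ hg =>
    refine ⟨fun e => by rw [map_inv, hg.1, inv_one], ?_⟩
    simp only [map_inv, (hh _).map_inv_of_eq_one (hg.1 _)]
    exact T.neg_mem hg.2

theorem card_add_finrank_span_le_card [Fintype E] [DecidableEq E] [Fintype I]
    (hh : ∀ e, IsCupPrimitive (α e) (β e) (h e)) (hα : ∀ e i, α e (ρ i) = 1)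
    (hβ : ∀ e i, β e (ρ i) = 1) (q : K →* Multiplicative M) {z : E → K}
    (hz : ∀ e, z e ∈ Subgroup.normalClosure (Set.range ρ)) (hqz : ∀ e, q (z e) = 1)
    (hhz : ∀ e e', h e (z e') = if e = e' then 1 else 0) :
    Fintype.card E + Module.finrank ℚ (Submodule.span ℚ (Set.range fun i => (q (ρ i)).toAdd)) ≤
      Fintype.card I := by
  let T := Submodule.span ℚ (Set.range fun i => ((q (ρ i)).toAdd, fun e => h e (ρ i)))
  have : FiniteDimensional ℚ T := FiniteDimensional.span_of_finite ℚ (Set.finite_range _)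
  let f := (LinearMap.fst ℚ M (E → ℚ)).domRestrict T
  have hrange : LinearMap.range f = Submodule.span ℚ (Set.range fun i => (q (ρ i)).toAdd) := by
    rw [LinearMap.range_domRestrict, Submodule.map_span, ← Set.range_comp]
    rfl
  have hsingle (e : E) : ((0 : M), Pi.single e (1 : ℚ)) ∈ T := by
    convert mem_span_of_mem_normalClosure hh hα hβ q (hz e) using 2
    · rw [hqz, toAdd_one]
    · funext e'
      rw [hhz, Pi.single_apply]
  have hindep : LinearIndependent ℚ fun e : E =>
      (⟨⟨_, hsingle e⟩, LinearMap.mem_ker.2 rfl⟩ : LinearMap.ker f) :=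
    .of_comp (LinearMap.snd ℚ M (E → ℚ) ∘ₗ T.subtype ∘ₗ (LinearMap.ker f).subtype)
      (Pi.linearIndependent_single_one E ℚ)
  calc _ ≤ Module.finrank ℚ (LinearMap.ker f) + Module.finrank ℚ (LinearMap.range f) := by
        rw [hrange]
        exact Nat.add_le_add_right hindep.fintype_card_le_finrank _
    _ = Module.finrank ℚ T := by rw [add_comm, f.finrank_range_add_finrank_ker]
    _ ≤ Fintype.card I := finrank_range_le_card _

end Rank

-- Each commutator of consecutive elements contributes a class to the second homology.
theorem add_finrank_span_le_card_of_cycle [IsFreeGroup K] {n : ℕ} {I M : Type*} [Fintype I]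
    [AddCommGroup M] [Module ℚ M] {α : ZMod (n + 3) → K →* Multiplicative ℚ} {ρ : I → K}
    {x : ZMod (n + 3) → K} (hρ : ∀ i k, α i (ρ k) = 1)
    (hx : ∀ i j, (α i (x j)).toAdd = if i = j then 1 else 0)
    (hcomm : ∀ i, ⁅x i, x (i + 1)⁆ ∈ Subgroup.normalClosure (Set.range ρ))
    (q : K →* Multiplicative M) :
    n + 3 + Module.finrank ℚ (Submodule.span ℚ (Set.range fun k => (q (ρ k)).toAdd)) ≤
      Fintype.card I := by
  choose h hh using fun i => exists_isCupPrimitive (α i) (α (i + 1))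
  have htwo : (2 : ZMod (n + 3)) ≠ 0 := by
    rw [← Nat.cast_two, Ne, ZMod.natCast_eq_zero_iff]
    exact fun hdvd => absurd (Nat.le_of_dvd two_pos hdvd) (by omega)
  have hdual (i j : ZMod (n + 3)) : h i ⁅x j, x (j + 1)⁆ = if i = j then 1 else 0 := by
    have hswap : ¬ (i = j + 1 ∧ i + 1 = j) := fun ⟨hij, hji⟩ => htwo <| by
      linear_combination hji - hij
    simp only [(hh i).map_commutatorElement, hx, ite_zero_mul_ite_zero, hswap, add_left_inj,
      and_self, mul_one, if_false, sub_zero]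
  have hq (i : ZMod (n + 3)) : q ⁅x i, x (i + 1)⁆ = 1 := by
    rw [map_commutatorElement, commutatorElement_eq_one_iff_mul_comm, mul_comm]
  have hbound := card_add_finrank_span_le_card hh hρ (fun i => hρ (i + 1)) q hcomm hq hdual
  rwa [ZMod.card] at hbound

end CupProduct

/-! ### Cycles of commuting elements in one-relator groups -/

section Obstruction

open scoped commutatorElement

theorem exists_finite_subset_mem_closure {G : Type*} [Group G] {s : Set G} {a : G}
    (ha : a ∈ Subgroup.closure s) : ∃ t ⊆ s, t.Finite ∧ a ∈ Subgroup.closure t := by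
  induction ha using Subgroup.closure_induction with
  | mem a ha =>
    exact ⟨{a}, Set.singleton_subset_iff.2 ha, Set.finite_singleton a,
      Subgroup.mem_closure_singleton_self a⟩
  | one => exact ⟨∅, Set.empty_subset s, Set.finite_empty, Subgroup.one_mem _⟩
  | mul a b _ _ ha hb =>
    obtain ⟨t, hts, ht, ha⟩ := ha
    obtain ⟨u, hus, hu, hb⟩ := hb
    exact ⟨t ∪ u, Set.union_subset hts hus, ht.union hu, Subgroup.mul_mem _
      (Subgroup.closure_mono Set.subset_union_left ha)
      (Subgroup.closure_mono Set.subset_union_right hb)⟩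
  | inv a _ ha =>
    obtain ⟨t, hts, ht, ha⟩ := ha
    exact ⟨t, hts, ht, Subgroup.inv_mem _ ha⟩

theorem mem_closure_iff_coe_mem_closure_image {G : Type*} [Group G] {S : Subgroup G} {s : Set S}
    {k : S} : k ∈ Subgroup.closure s ↔ (k : G) ∈ Subgroup.closure ((↑) '' s : Set G) := by
  rw [← S.coe_subtype, ← MonoidHom.map_closure, Subgroup.mem_map_iff_mem S.subtype_injective]

theorem exists_lift_closure_of_injective {F G Q : Type*} [Group F] [Group G] [Group Q]
    {π : F →* Q} {φ : G →* Q} (hφ : Injective φ) {s : Set F} (hs : ∀ g ∈ s, π g ∈ φ.range) :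
    ∃ ψ : Subgroup.closure s →* G, ∀ k, φ (ψ k) = π k := by
  have hle : Subgroup.closure s ≤ φ.range.comap π := (Subgroup.closure_le _).2 hs
  let f := (π.comp (Subgroup.closure s).subtype).codRestrict φ.range fun k => hle k.2
  exact ⟨(φ.ofInjective hφ).symm.toMonoidHom.comp f, fun k =>
    congrArg Subtype.val ((φ.ofInjective hφ).apply_symm_apply (f k))⟩

variable {B : Type*} {l : ℕ} {w : ZMod l → B × Bool}

section Stabilizer

variable {X : Type*} [MulAction (FreeGroup B) X] {x₀ : X} {N : ℕ}

theorem isConj_of_cellThrough_eq [NeZero l] (hN : N ≠ 0) {g g' : FreeGroup B}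
    {ρ ρ' : MulAction.stabilizer (FreeGroup B) x₀}
    (hρ : (ρ : FreeGroup B) = g * wordProd w l ^ N * g⁻¹)
    (hρ' : (ρ' : FreeGroup B) = g' * wordProd w l ^ N * g'⁻¹)
    (h : cellThrough w (g⁻¹ • x₀, 0) = cellThrough w (g'⁻¹ • x₀, 0)) : IsConj ρ ρ' := by
  have hfix := smul_inv_smul_eq_of_conj_mem_stabilizer (hρ' ▸ ρ'.2)
  have hmem : (g'⁻¹ • x₀, 0) ∈ cellThrough w (g⁻¹ • x₀, 0) := by
    rw [h, mem_cellThrough_iff_sameCycle (mem_periodicPts_strandShift hN hfix)]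
  obtain ⟨j, hj⟩ := exists_pow_smul_eq_of_mem_cellThrough hmem
  refine isConj_iff.2 ⟨⟨g' * wordProd w l ^ j * g⁻¹, ?_⟩, Subtype.ext ?_⟩
  · rw [MulAction.mem_stabilizer_iff, mul_smul, mul_smul, hj, smul_inv_smul]
  · simp only [Subgroup.coe_mul, Subgroup.coe_inv, hρ, hρ']
    group

-- Relators running along the same cell are conjugate, so one relator per cell suffices; the
-- lower bound on the second homology then contradicts the bound given by the stacking.
theorem not_forall_commutator_mem_closure [NeZero l] (hred : IsReducedWord w)
    (hprim : IsPrimitiveWord w) (hN : N ≠ 0) [MulAction.IsPretransitive (FreeGroup B) X]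
    {K : Subgroup (FreeGroup B)} (hK : MulAction.stabilizer (FreeGroup B) x₀ = K)
    {I : Type*} [Finite I] {g : I → FreeGroup B} {ρ : I → K}
    (hρ : ∀ i, (ρ i : FreeGroup B) = g i * wordProd w l ^ N * (g i)⁻¹) {n : ℕ}
    {x : ZMod (n + 3) → K} (hgen : Subgroup.closure (Set.range x ∪ Set.range ρ) = ⊤)
    {α : ZMod (n + 3) → K →* Multiplicative ℚ}
    (hαρ : ∀ i k, α i (ρ k) = 1) (hαx : ∀ i j, (α i (x j)).toAdd = if i = j then 1 else 0) :
    ¬ ∀ i, ⁅x i, x (i + 1)⁆ ∈ Subgroup.closure (Set.range ρ) := by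
  subst hK
  intro hcomm
  let cell (i : I) : Finset (X × ZMod l) := cellThrough w ((g i)⁻¹ • x₀, 0)
  let rep : Set.range cell → I := Set.rangeSplitting cell
  have hcell : Injective (cell ∘ rep) := by
    rw [Set.comp_rangeSplitting]
    exact Subtype.val_injective
  have := Fintype.ofFinite (Set.range cell)
  have hle : Subgroup.closure (Set.range ρ) ≤ Subgroup.normalClosure (Set.range (ρ ∘ rep)) := by
    rw [Subgroup.closure_le]
    rintro _ ⟨i, rfl⟩
    have hconj := isConj_of_cellThrough_eq hN (hρ _) (hρ i)
      (Set.apply_rangeSplitting cell ⟨cell i, i, rfl⟩)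
    exact Subgroup.conjugatesOfSet_subset_normalClosure
      (Group.mem_conjugatesOfSet_iff.2 ⟨_, ⟨_, rfl⟩, hconj⟩)
  have hgen' :
      Subgroup.closure (Set.range x) ⊔ Subgroup.normalClosure (Set.range (ρ ∘ rep)) = ⊤ := by
    rw [eq_top_iff, ← hgen, Subgroup.closure_union]
    exact sup_le_sup_left hle _
  have hlt := card_lt_finrank_span_loopChain_add_card hred hprim hN (fun c => hρ (rep c)) hcell
    hgen'
  have hge := add_finrank_span_le_card_of_cycle (fun i c => hαρ i (rep c)) hαx
    (fun i => hle (hcomm i)) (loopChain x₀)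
  rw [ZMod.card] at hlt
  exact absurd (hlt.trans_eq (add_comm _ _)) hge.not_gt

end Stabilizer

theorem exists_lifts_commutator_mem_closure {F Q ι : Type*} [Group F] [Group Q] [Finite ι]
    {π : F →* Q} (hπ : Surjective π) {s : Set F} (hker : π.ker = Subgroup.normalClosure s)
    {y : ι → Q} {σ : ι → ι} (hy : ∀ i, Commute (y i) (y (σ i))) :
    ∃ (x : ι → F) (T : Set F), (∀ i, π (x i) = y i) ∧ T.Finite ∧ T ⊆ Group.conjugatesOfSet s ∧
      ∀ i, ⁅x i, x (σ i)⁆ ∈ Subgroup.closure T := by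
  choose x hx using fun i => hπ (y i)
  have hcomm (i : ι) : ⁅x i, x (σ i)⁆ ∈ Subgroup.normalClosure s := by
    rw [← hker, MonoidHom.mem_ker, map_commutatorElement, hx, hx,
      commutatorElement_eq_one_iff_commute.2 (hy i)]
  choose t hts ht hcomm using fun i => exists_finite_subset_mem_closure (hcomm i)
  exact ⟨x, ⋃ i, t i, hx, Set.finite_iUnion ht, Set.iUnion_subset hts,
    fun i => Subgroup.closure_mono (Set.subset_iUnion t i) (hcomm i)⟩

theorem not_forall_commute_of_characters [NeZero l] (hred : IsReducedWord w)
    (hprim : IsPrimitiveWord w) {N : ℕ} (hN : N ≠ 0) {G Q : Type*} [Group G] [Group Q]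
    {π : FreeGroup B →* Q} (hπ : Surjective π)
    (hker : π.ker = Subgroup.normalClosure {wordProd w l ^ N}) {φ : G →* Q} (hφ : Injective φ)
    {n : ℕ} {y : ZMod (n + 3) → G} {α : ZMod (n + 3) → G →* Multiplicative ℚ}
    (hα : ∀ i j, (α i (y j)).toAdd = if i = j then 1 else 0) :
    ¬ ∀ i, Commute (y i) (y (i + 1)) := by
  intro hy
  obtain ⟨x, T, hx, hTfin, hT, hcomm⟩ :=
    exists_lifts_commutator_mem_closure hπ hker (fun i => (hy i).map φ)
  have := hTfin.to_subtype
  have hTconj (a : T) : ∃ g, (a : FreeGroup B) = g * wordProd w l ^ N * g⁻¹ := by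
    obtain ⟨_, hR, hconj⟩ := Group.mem_conjugatesOfSet_iff.1 (hT a.2)
    obtain ⟨g, hg⟩ := isConj_iff.1 hconj
    exact ⟨g, by rw [← hg, Set.mem_singleton_iff.1 hR]⟩
  choose g hg using hTconj
  have hπT (a : T) : π a = 1 := by
    rw [← MonoidHom.mem_ker, hker]
    exact Subgroup.conjugatesOfSet_subset_normalClosure (hT a.2)
  let K := Subgroup.closure (Set.range x ∪ T)
  let x' (i : ZMod (n + 3)) : K := ⟨x i, Subgroup.subset_closure (.inl ⟨i, rfl⟩)⟩
  let ρ (a : T) : K := ⟨a, Subgroup.subset_closure (.inr a.2)⟩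
  have hx' : ((↑) '' Set.range x' : Set (FreeGroup B)) = Set.range x := (Set.range_comp _ _).symm
  have hρ : ((↑) '' Set.range ρ : Set (FreeGroup B)) = T :=
    (Set.range_comp _ _).symm.trans Subtype.range_coe
  have hrange : ∀ a ∈ Set.range x ∪ T, π a ∈ φ.range := by
    rintro _ (⟨i, rfl⟩ | ha)
    · exact ⟨y i, (hx i).symm⟩
    · exact ⟨1, (map_one φ).trans (hπT ⟨_, ha⟩).symm⟩
  obtain ⟨ψ, hψ⟩ := exists_lift_closure_of_injective hφ hrange
  have hψx (i : ZMod (n + 3)) : ψ (x' i) = y i := hφ ((hψ _).trans (hx i))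
  have hψρ (a : T) : ψ (ρ a) = 1 := hφ ((hψ _).trans ((hπT a).trans (map_one φ).symm))
  have hgen : Subgroup.closure (Set.range x' ∪ Set.range ρ) = ⊤ :=
    (Subgroup.eq_top_iff' _).2 fun k => mem_closure_iff_coe_mem_closure_image.2 <| by
      rw [Set.image_union, hx', hρ]
      exact k.2
  refine not_forall_commutator_mem_closure hred hprim hN (MulAction.stabilizer_quotient K) hg hgen
    (α := fun i => (α i).comp ψ) (fun i a => ?_) (fun i j => ?_) fun i => ?_
  · rw [MonoidHom.comp_apply, hψρ, map_one]
  · rw [MonoidHom.comp_apply, hψx, hα]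
  · rw [mem_closure_iff_coe_mem_closure_image, hρ]
    exact hcomm i

end Obstruction

/-! ### Roots of cyclically reduced words -/

section Roots

variable {B : Type*}

theorem letterInv_injective : Injective (letterInv (B := B)) :=
  (show Involutive letterInv from letterInv_letterInv).injective

theorem ne_letterInv_iff {a b : B × Bool} : a ≠ letterInv b ↔ (b.1 = a.1 → b.2 = a.2) := by
  rw [letterInv, Ne, Prod.ext_iff, not_and, Bool.eq_not, not_not, eq_comm, eq_comm (a := a.2)]

theorem getElem_mod_succ_ne_letterInv {L : List (B × Bool)} (hL : FreeGroup.IsCyclicallyReduced L)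
    (hpos : 0 < L.length) (k : ℕ) :
    L[(k + 1) % L.length]'(Nat.mod_lt _ hpos) ≠
      letterInv (L[k % L.length]'(Nat.mod_lt _ hpos)) := by
  have hk := Nat.mod_lt k hpos
  have hred : FreeGroup.IsReduced (L ++ L) := by
    simpa [List.replicate] using (hL.flatten_replicate 2).isReduced
  have hget (j : ℕ) (hj : j < (L ++ L).length) :
      (L ++ L)[j] = L[j % L.length]'(Nat.mod_lt _ hpos) := by
    rw [List.length_append] at hj
    rw [List.getElem_append]
    split_ifs with h
    · simp only [Nat.mod_eq_of_lt h]
    · simp only [Nat.mod_eq_sub_mod (not_lt.1 h),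
        Nat.mod_eq_of_lt (show j - L.length < L.length by omega)]
  have := List.isChain_iff_getElem.1 hred (k % L.length) (by rw [List.length_append]; omega)
  simp only [hget, Nat.mod_mod, Nat.mod_add_mod] at this
  exact ne_letterInv_iff.2 this

theorem exists_isPrimitiveWord_of_periodic {W : ℕ → B × Bool} {m : ℕ} (hm : 0 < m)
    (hW : Periodic W m) :
    ∃ (l : ℕ) (_ : NeZero l) (w : ZMod l → B × Bool),
      IsPrimitiveWord w ∧ l ∣ m ∧ ∀ k : ℕ, w k = W k := by
  let shift (f : ℕ → B × Bool) (i : ℕ) : B × Bool := f (i + 1)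
  have hshift (k i : ℕ) : shift^[k] W i = W (i + k) := by
    induction k generalizing i with
    | zero => rfl
    | succ k ih => rw [iterate_succ_apply', add_comm k, ← add_assoc, ← ih]
  have hper : IsPeriodicPt shift m W := funext fun i => (hshift m i).trans (hW i)
  let l := minimalPeriod shift W
  have : NeZero l := ⟨(hper.minimalPeriod_pos hm).ne'⟩
  have hw (k : ℕ) : W (k : ZMod l).val = W k := by
    rw [ZMod.val_natCast, ← zero_add (k % l), ← hshift, iterate_mod_minimalPeriod_eq, hshift,
      zero_add]
  refine ⟨l, this, fun i => W i.val, fun k hk => ?_, hper.minimalPeriod_dvd, hw⟩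
  have hk' : IsPeriodicPt shift k.val W := funext fun i => by
    rw [hshift, ← hw (i + k.val), Nat.cast_add, ZMod.natCast_zmod_val, ← hw i]
    exact hk i
  exact (ZMod.natCast_zmod_val k).symm.trans
    ((ZMod.natCast_eq_zero_iff _ _).2 hk'.minimalPeriod_dvd)

theorem inv_mk_eq_wordProd {l : ℕ} {w : ZMod l → B × Bool} {L : List (B × Bool)}
    (h : ∀ (i : ℕ) (hi : i < L.length), w i = letterInv L[i]) :
    (FreeGroup.mk L)⁻¹ = wordProd w L.length := by
  induction L using List.reverseRecOn with
  | nil => rfl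
  | append_singleton L a ih =>
    have ha : w L.length = letterInv a := by
      simpa using h L.length (by simp)
    have hL := ih fun i hi => by
      rw [h i (by simp; omega), List.getElem_append_left hi]
    rw [← FreeGroup.mul_mk, mul_inv_rev, hL, List.length_append, List.length_singleton, wordProd,
      ha, FreeGroup.inv_mk]
    rfl

theorem exists_isConj_wordProd_pow {r : FreeGroup B} (hr : r ≠ 1) :
    ∃ (l : ℕ) (_ : NeZero l) (w : ZMod l → B × Bool) (N : ℕ),
      IsReducedWord w ∧ IsPrimitiveWord w ∧ N ≠ 0 ∧ IsConj r (wordProd w l ^ N) := by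
  classical
  obtain ⟨L, hL, hconj⟩ : ∃ L, FreeGroup.IsCyclicallyReduced L ∧ IsConj (FreeGroup.mk L)⁻¹ r := by
    refine ⟨_, FreeGroup.reduceCyclically.isCyclicallyReduced
      (FreeGroup.isReduced_toWord (x := r⁻¹)), isConj_iff.2
        ⟨FreeGroup.mk (FreeGroup.reduceCyclically.conjugator r⁻¹.toWord), ?_⟩⟩
    rw [← conj_inv, inv_eq_iff_eq_inv, FreeGroup.inv_mk, FreeGroup.mul_mk, FreeGroup.mul_mk,
      FreeGroup.reduceCyclically.conj_conjugator_reduceCyclically, FreeGroup.mk_toWord]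
  have hpos : 0 < L.length := List.length_pos_iff.2 fun h => hr <| by
    rwa [h, ← FreeGroup.one_eq_mk, inv_one, isConj_one_right] at hconj
  let W (k : ℕ) : B × Bool := letterInv (L[k % L.length]'(Nat.mod_lt _ hpos))
  obtain ⟨l, hl, w, hprim, ⟨N, hN⟩, hw⟩ := exists_isPrimitiveWord_of_periodic hpos
    (show Periodic W L.length from fun k => by simp only [W, Nat.add_mod_right])
  refine ⟨l, hl, w, N, fun i => ?_, hprim, right_ne_zero_of_mul (hN ▸ hpos.ne'), ?_⟩
  · rw [← ZMod.natCast_zmod_val i, ← Nat.cast_succ, hw, hw]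
    exact letterInv_injective.ne (getElem_mod_succ_ne_letterInv hL hpos _)
  · rw [← wordProd_period_mul, ← hN, ← inv_mk_eq_wordProd]
    · exact hconj.symm
    · exact fun i hi => by simp only [hw, W, Nat.mod_eq_of_lt hi]

end Roots

/-! ### One-relator groups containing a right-angled Artin group -/

theorem exists_embedding_cycle_of_not_isAcyclic {V : Type*} {Γ : SimpleGraph V}
    (hΓ : ¬ Γ.IsAcyclic) :
    ∃ (n : ℕ) (v : ZMod (n + 3) ↪ V), ∀ i, Γ.Adj (v i) (v (i + 1)) := by
  rw [SimpleGraph.isAcyclic_iff_free_cycleGraph] at hΓ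
  push Not at hΓ
  obtain ⟨n, hn, hcopy⟩ := hΓ
  obtain ⟨n, rfl⟩ := Nat.exists_eq_add_of_le' hn
  obtain ⟨f⟩ := hcopy
  exact ⟨n, f.toEmbedding, fun i => f.toHom.map_rel <|
    SimpleGraph.cycleGraph_adj.2 (.inr (add_sub_cancel_left (G := ZMod (n + 3)) i 1))⟩

theorem normalClosure_singleton_eq_of_isConj {G : Type*} [Group G] {a b : G} (h : IsConj a b) :
    Subgroup.normalClosure {a} = Subgroup.normalClosure {b} := by
  rw [Subgroup.normalClosure, Subgroup.normalClosure, Group.conjugatesOfSet,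
    Group.conjugatesOfSet, Set.biUnion_singleton, Set.biUnion_singleton,
    isConj_iff_conjugatesOf_eq.1 h]

theorem exists_injective_presentedGroup_one {B : Type*} :
    ∃ θ : PresentedGroup ({1} : Set (FreeGroup B)) →*
      PresentedGroup {FreeGroup.of (none : Option B)}, Injective θ := by
  let θ : PresentedGroup ({1} : Set (FreeGroup B)) →*
      PresentedGroup {FreeGroup.of (none : Option B)} :=
    PresentedGroup.toGroup (f := fun b => .of (some b)) (by rintro _ rfl; exact map_one _)
  let ζ : PresentedGroup {FreeGroup.of (none : Option B)} →*
      PresentedGroup ({1} : Set (FreeGroup B)) :=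
    PresentedGroup.toGroup (f := fun b => b.elim 1 .of) (by rintro _ rfl; simp)
  have hζθ : ζ.comp θ = MonoidHom.id _ := PresentedGroup.ext fun b => by simp [θ, ζ]
  exact ⟨θ, LeftInverse.injective (DFunLike.congr_fun hζθ)⟩

theorem EmbedsInOneRelator.exists_ne_one {G : Type*} [Group G] (h : EmbedsInOneRelator G) :
    ∃ (B : Type) (r : FreeGroup B) (φ : G →* PresentedGroup {r}), r ≠ 1 ∧ Injective φ := by
  obtain ⟨B, r, φ, hφ⟩ := h
  by_cases hr : r = 1
  · subst hr
    obtain ⟨θ, hθ⟩ := exists_injective_presentedGroup_one (B := B)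
    exact ⟨Option B, .of none, θ.comp φ, FreeGroup.of_ne_one none, hθ.comp hφ⟩
  · exact ⟨B, r, φ, hr, hφ⟩

theorem EmbedsInOneRelator.isAcyclic {V : Type} {Γ : SimpleGraph V}
    (h : EmbedsInOneRelator (RAAG Γ)) : Γ.IsAcyclic := by
  classical
  obtain ⟨B, r, φ, hr, hφ⟩ := h.exists_ne_one
  by_contra hΓ
  obtain ⟨n, v, hv⟩ := exists_embedding_cycle_of_not_isAcyclic hΓ
  obtain ⟨l, _, w, N, hred, hprim, hN, hconj⟩ := exists_isConj_wordProd_pow hr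
  have hker : (PresentedGroup.mk {r}).ker = Subgroup.normalClosure {wordProd w l ^ N} :=
    (QuotientGroup.ker_mk' _).trans (normalClosure_singleton_eq_of_isConj hconj)
  let α (i : ZMod (n + 3)) : RAAG Γ →* Multiplicative ℚ :=
    RAAG.lift (Pi.mulSingle (v i) (.ofAdd 1)) fun _ _ _ => Commute.all _ _
  have hα (i j : ZMod (n + 3)) : (α i (RAAG.of Γ (v j))).toAdd = if i = j then 1 else 0 := by
    simp only [α, RAAG.lift_of, Pi.mulSingle_apply, v.injective.eq_iff, eq_comm (a := j)]
    split_ifs <;> rfl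
  exact not_forall_commute_of_characters hred hprim hN (PresentedGroup.mk_surjective _) hker hφ hα
    fun i => RAAG.commute_of (hv i)

/-- For a simple graph `Γ` on a finite vertex set, the right-angled Artin group `A(Γ)`
embeds into some one-relator group if and only if `Γ` is acyclic (a forest). -/
theorem raag_embeds_oneRelator_iff_isAcyclic (V : Type) [Fintype V] (Γ : SimpleGraph V) :
    (∃ (B : Type) (r : FreeGroup B) (φ : PresentedGroup (raagRels Γ) →* PresentedGroup {r}),
      Function.Injective φ) ↔ Γ.IsAcyclic :=
  ⟨EmbedsInOneRelator.isAcyclic, fun h => (embedsInHost_of_isAcyclic h).embedsInOneRelator⟩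
end
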